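/- arXiv:0905.4553 — 5 statements merged into one kernel-verified Lean document; each statement's English description precedes it below -/
import Mathlib

section
/- Let f : ℝ → ℝ be C² with antiderivative F (F' = f, F(0) = 0) and set V(s; a, c) = F(s) − (c/2)s² − a·s. Let N ⊆ ℝ³ be open and let u_−, u_+ : N → ℝ be C¹ with u_−(a,E,c) < u_+(a,E,c), V(u_±(a,E,c); a, c) = E, ∂V/∂s(u_−(a,E,c); a, c) ≠ 0, ∂V/∂s(u_+(a,E,c); a, c) ≠ 0, and V(s; a, c) < E for all s ∈ (u_−(a,E,c), u_+(a,E,c)). Then the improper integrals T = 2∫_{u_−}^{u_+} (2(E − V(s;a,c)))^{−1/2} ds, M = 2∫_{u_−}^{u_+} s·(2(E − V(s;a,c)))^{−1/2} ds, and P = 2∫_{u_−}^{u_+} s²·(2(E − V(s;a,c)))^{−1/2} ds converge on N, the function K(a,E,c) = 2∫_{u_−}^{u_+} √(2(E − V(s;a,c))) ds is differentiable on N, and ∂K/∂a = M, ∂K/∂E = T, ∂K/∂c = P/2 at every point of N. -/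
open MeasureTheory

/-!
Write `G(s; q) = 2 (E - V(s; a, c))` for `q = (a, E, c)`. It is affine in `q`, positive on
`(u₋(q), u₊(q))`, and has simple zeros at both endpoints. Two observations make the theorem an
instance of differentiation under the integral sign, with no boundary terms.

* `Real.sqrt` vanishes on negative numbers. By simplicity of the zeros there is a *fixed* interval
  `[A, B]` with `A < u₋(p)`, `u₊(p) < B`, on which `G(·; q)` is negative off `[u₋(q), u₊(q)]` for
  all `q` near `p` (`exists_neg_left_of_deriv_pos`, `exists_neg_right_of_deriv_neg`). Hence
  `K(q) = 2 ∫_{[A, B]} √(G(s; q)) ds` near `p`, and the endpoints no longer move.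
* For every real `x` and every `y ≠ 0`, of either sign, `|√x - √y| ≤ |x - y| / √|y|`
  (`abs_sqrt_sub_sqrt_le`). So `q ↦ √(G(s; q))` satisfies a Lipschitz estimate centred at `p`
  with constant `O(1 / √|G(s; p)|)`. This is integrable over `[A, B]` because the zeros of
  `G(·; p)` are simple (`integrableOn_inv_sqrt_abs`), which also gives the convergence of
  `T`, `M` and `P`.

The pointwise derivative at `p` is `∂_q G(s; p) / (2 √(G(s; p)))` where `G > 0` and `0` where
`G < 0`; integrating it gives the claimed gradient.
-/

/-- The sign of `y` is arbitrary: `Real.sqrt` is `0` on negative numbers, and then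
`√x * √(-y) ≤ max x (-y) ≤ x - y`. -/
lemma abs_sqrt_sub_sqrt_le (x y : ℝ) (hy : y ≠ 0) :
    |√x - √y| ≤ |x - y| / √|y| := by
  have hp : 0 < √|y| := Real.sqrt_pos.2 (abs_pos.2 hy)
  rw [le_div_iff₀ hp]
  rcases lt_or_gt_of_ne hy with h | h
  · rw [Real.sqrt_eq_zero_of_nonpos h.le, sub_zero, abs_of_neg h] at *
    rcases le_or_gt x 0 with hx | hx
    · rw [Real.sqrt_eq_zero_of_nonpos hx]
      simp
    · rw [abs_of_nonneg (Real.sqrt_nonneg x), abs_of_pos (by linarith)]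
      nlinarith [Real.sq_sqrt hx.le, Real.sq_sqrt (neg_pos.2 h).le,
        sq_nonneg (√x - √(-y))]
  · rw [abs_of_pos h] at *
    rcases le_or_gt x 0 with hx | hx
    · rw [Real.sqrt_eq_zero_of_nonpos hx, zero_sub, abs_neg,
        abs_of_nonneg (Real.sqrt_nonneg y), Real.mul_self_sqrt h.le, abs_sub_comm]
      rw [abs_of_pos (by linarith)]
      linarith
    · have e : |x - y| = |√x - √y| * (√x + √y) := by
        rw [← abs_of_nonneg (add_nonneg (Real.sqrt_nonneg x) (Real.sqrt_nonneg y)), ← abs_mul]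
        congr 1
        nlinarith [Real.sq_sqrt hx.le, Real.sq_sqrt h.le]
      rw [e]
      gcongr
      linarith [Real.sqrt_nonneg x]

lemma integrableOn_inv_sqrt_abs_sub (x a b : ℝ) :
    IntegrableOn (fun s => 1 / √|s - x|) (Set.Ioo a b) := by
  have key : ∀ R : ℝ, 0 ≤ R → IntervalIntegrable (fun s : ℝ => 1 / √|s|) volume 0 R := by
    intro R hR
    refine (intervalIntegral.intervalIntegrable_rpow' (r := -(1/2))
      (by norm_num) : IntervalIntegrable _ volume 0 R).congr ?_
    intro s hs
    rw [Set.uIoc_of_le hR] at hs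
    simp only
    rw [abs_of_pos hs.1, Real.sqrt_eq_rpow, Real.rpow_neg hs.1.le, one_div, one_div]
  have key' : ∀ R : ℝ, IntervalIntegrable (fun s : ℝ => 1 / √|s|) volume 0 R := by
    intro R
    rcases le_total 0 R with h | h
    · exact key R h
    · have := (IntervalIntegrable.iff_comp_neg).1 (key (-R) (by linarith))
      simpa using this
  have h2 := ((key' (a - x)).symm.trans (key' (b - x))).comp_sub_right x
  simp only [sub_add_cancel] at h2
  rcases le_total a b with h | h
  · exact ((intervalIntegrable_iff_integrableOn_Ioc_of_le h).1 h2).mono_set Set.Ioo_subset_Ioc_self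
  · simp [Set.Ioo_eq_empty_of_le h]

/-- A function with only simple zeros on a compact set has `|h| ≥ m |s - x|` near each of its
zeros `x`, so `1 / √|h|` is integrable there. -/
lemma integrableOn_inv_sqrt_abs (h : ℝ → ℝ) (hc : Continuous h) (K : Set ℝ) (hK : IsCompact K)
    (hz : ∀ x ∈ K, h x = 0 → ∃ d, d ≠ 0 ∧ HasDerivAt h d x) :
    IntegrableOn (fun s => 1 / √|h s|) K := by
  have hm : Measurable (fun s => 1 / √|h s|) := by
    have := hc.measurable
    fun_prop
  refine LocallyIntegrableOn.integrableOn_isCompact ?_ hK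
  intro x hx
  suffices H : IntegrableAtFilter (fun s => 1 / √|h s|) (nhds x) from
    H.filter_mono nhdsWithin_le_nhds
  by_cases h0 : h x = 0
  · obtain ⟨d, hd, hder⟩ := hz x hx h0
    have hlo := hder.isLittleO.def (half_pos (abs_pos.2 hd))
    obtain ⟨l, u, hxu, hsub⟩ := mem_nhds_iff_exists_Ioo_subset.1 hlo
    refine ⟨Set.Ioo l u, Ioo_mem_nhds hxu.1 hxu.2, ?_⟩
    have hb := (integrableOn_inv_sqrt_abs_sub x l u).const_mul (1 / √(|d| / 2))
    refine Integrable.mono' hb hm.aestronglyMeasurable ?_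
    filter_upwards [ae_restrict_mem measurableSet_Ioo,
      ae_restrict_of_ae (Measure.ae_ne volume x)] with s hs hsx
    have h1 := hsub hs
    simp only [Set.mem_ofPred_eq, h0, sub_zero, smul_eq_mul, Real.norm_eq_abs] at h1
    have h2 : |d| / 2 * |s - x| ≤ |h s| := by
      have h3 := abs_sub_abs_le_abs_sub ((s - x) * d) (h s)
      rw [abs_sub_comm, abs_mul] at h3
      nlinarith
    have hdp : 0 < |d| / 2 := half_pos (abs_pos.2 hd)
    have hsp : 0 < |s - x| := abs_pos.2 (sub_ne_zero.2 hsx)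
    rw [Real.norm_of_nonneg (by positivity), div_mul_div_comm, one_mul, ← Real.sqrt_mul hdp.le]
    exact one_div_le_one_div_of_le (Real.sqrt_pos.2 (by positivity)) (Real.sqrt_le_sqrt h2)
  · have hpos : 0 < √|h x| := Real.sqrt_pos.2 (abs_pos.2 h0)
    have hcon : ContinuousAt (fun s => 1 / √|h s|) x := by
      refine ContinuousAt.div continuousAt_const ?_ hpos.ne'
      fun_prop
    exact hcon.integrableAtFilter hm.stronglyMeasurable.stronglyMeasurableAtFilter
      (volume.finiteAt_nhds x)

/-- If `u q` is a zero of `G(·; q)`, continuous in `q` at `p`, and `∂G/∂s > 0` at `(u p, p)`, then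
`G(·; q)` is increasing on a neighbourhood of `u p` that does not depend on `q` near `p`. Hence the
left endpoint `A` below serves all such `q` at once. -/
lemma exists_neg_left_of_deriv_pos {X : Type*} [PseudoMetricSpace X] (G D : ℝ → X → ℝ)
    (hG : ∀ s q, HasDerivAt (fun s => G s q) (D s q) s)
    (hD : Continuous (fun z : ℝ × X => D z.1 z.2)) (u : X → ℝ) (p : X)
    (hu : ContinuousAt u p) (hz : ∀ᶠ q in nhds p, G (u q) q = 0) (hpos : 0 < D (u p) p) :
    ∃ A < u p, ∀ᶠ q in nhds p, ∀ s ∈ Set.Ico A (u q), G s q < 0 := by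
  have h1 : ∀ᶠ z : ℝ × X in nhds (u p, p), 0 < D z.1 z.2 :=
    (hD.continuousAt (x := (u p, p))).eventually (lt_mem_nhds hpos)
  obtain ⟨ε, hε, hball⟩ := Metric.eventually_nhds_iff.1 h1
  refine ⟨u p - ε / 2, by linarith, ?_⟩
  have h2 : ∀ᶠ q in nhds p, u q < u p + ε / 2 := hu.eventually (gt_mem_nhds (by linarith))
  filter_upwards [hz, h2, Metric.ball_mem_nhds p hε] with q hq0 hq1 hq2 s hs
  have hmono : StrictMonoOn (fun s => G s q) (Set.Icc (u p - ε / 2) (u p + ε / 2)) := by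
    refine strictMonoOn_of_deriv_pos (convex_Icc _ _)
      (fun s _ => (hG s q).continuousAt.continuousWithinAt) ?_
    intro t ht
    rw [interior_Icc] at ht
    rw [(hG t q).deriv]
    refine hball (y := (t, q)) ?_
    rw [Prod.dist_eq, max_lt_iff]
    refine ⟨?_, hq2⟩
    rw [Real.dist_eq, abs_lt]
    constructor <;> linarith [ht.1, ht.2]
  rw [← hq0]
  exact hmono ⟨hs.1, by linarith [hs.2]⟩ ⟨by linarith [hs.1, hs.2], hq1.le⟩ hs.2

/-- The mirror image of `exists_neg_left_of_deriv_pos` under `s ↦ -s`. -/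
lemma exists_neg_right_of_deriv_neg {X : Type*} [PseudoMetricSpace X] (G D : ℝ → X → ℝ)
    (hG : ∀ s q, HasDerivAt (fun s => G s q) (D s q) s)
    (hD : Continuous (fun z : ℝ × X => D z.1 z.2)) (u : X → ℝ) (p : X)
    (hu : ContinuousAt u p) (hz : ∀ᶠ q in nhds p, G (u q) q = 0) (hneg : D (u p) p < 0) :
    ∃ B > u p, ∀ᶠ q in nhds p, ∀ s ∈ Set.Ioc (u q) B, G s q < 0 := by
  obtain ⟨A, hA, h⟩ := exists_neg_left_of_deriv_pos (fun s q => G (-s) q) (fun s q => -D (-s) q)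
    (fun s q => by simpa [Function.comp_def] using (hG (-s) q).comp s (hasDerivAt_neg s))
    (by
      have : Continuous (fun z : ℝ × X => (-z.1, z.2)) := by fun_prop
      exact (hD.comp this).neg)
    (fun q => -u q) p hu.neg (by simpa using hz) (by simpa using hneg)
  refine ⟨-A, by linarith, ?_⟩
  filter_upwards [h] with q hq s hs
  simpa using hq (-s) ⟨by linarith [hs.2], by linarith [hs.1]⟩

lemma deriv_nonneg_of_pos_right (h : ℝ → ℝ) (d u v : ℝ) (huv : u < v) (hd : HasDerivAt h d u)
    (h0 : h u = 0) (hpos : ∀ s ∈ Set.Ioo u v, 0 < h s) : 0 ≤ d := by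
  have ht := (hasDerivWithinAt_iff_tendsto_slope' (s := Set.Ioi u) (by simp)).1
    hd.hasDerivWithinAt
  refine ge_of_tendsto ht ?_
  filter_upwards [Ioo_mem_nhdsGT huv] with s hs
  rw [slope_def_field, h0, sub_zero]
  exact (div_pos (hpos s hs) (sub_pos.2 hs.1)).le

lemma deriv_nonpos_of_pos_left (h : ℝ → ℝ) (d u v : ℝ) (huv : u < v) (hd : HasDerivAt h d v)
    (h0 : h v = 0) (hpos : ∀ s ∈ Set.Ioo u v, 0 < h s) : d ≤ 0 := by
  have ht := (hasDerivWithinAt_iff_tendsto_slope' (s := Set.Iio v) (by simp)).1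
    hd.hasDerivWithinAt
  refine le_of_tendsto ht ?_
  filter_upwards [Ioo_mem_nhdsLT huv] with s hs
  rw [slope_def_field, h0, sub_zero]
  exact (div_neg_of_pos_of_neg (hpos s hs) (sub_neg.2 hs.2)).le

/-- The improper integrals defining the period `T`, mass `M`, and momentum `P`
of a periodic gKdV orbit converge, and the classical action
`K(a,E,c) = 2∫ √(2(E − V(s;a,c))) ds` is differentiable with
`∂K/∂a = M`, `∂K/∂E = T`, `∂K/∂c = P/2`. -/
theorem gkdv_action_gradient
    (f F : ℝ → ℝ) (hf : ContDiff ℝ 2 f)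
    (hF : ∀ s, HasDerivAt F (f s) s) (hF0 : F 0 = 0)
    (V : ℝ → ℝ → ℝ → ℝ) (hV : ∀ s a c, V s a c = F s - c/2 * s^2 - a * s)
    (N : Set (ℝ × ℝ × ℝ)) (hN : IsOpen N)
    (um up : ℝ × ℝ × ℝ → ℝ)
    (hum : ContDiffOn ℝ 1 um N) (hup : ContDiffOn ℝ 1 up N)
    (horder : ∀ p ∈ N, um p < up p)
    (hVm : ∀ a E c : ℝ, (a, E, c) ∈ N → V (um (a, E, c)) a c = E)
    (hVp : ∀ a E c : ℝ, (a, E, c) ∈ N → V (up (a, E, c)) a c = E)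
    (hVm' : ∀ a E c : ℝ, (a, E, c) ∈ N → deriv (fun s => V s a c) (um (a, E, c)) ≠ 0)
    (hVp' : ∀ a E c : ℝ, (a, E, c) ∈ N → deriv (fun s => V s a c) (up (a, E, c)) ≠ 0)
    (hbelow : ∀ a E c : ℝ, (a, E, c) ∈ N →
      ∀ s ∈ Set.Ioo (um (a, E, c)) (up (a, E, c)), V s a c < E) :
    ∀ a E c : ℝ, (a, E, c) ∈ N →
      IntegrableOn (fun s => 1 / Real.sqrt (2 * (E - V s a c)))
        (Set.Ioo (um (a, E, c)) (up (a, E, c))) ∧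
      IntegrableOn (fun s => s / Real.sqrt (2 * (E - V s a c)))
        (Set.Ioo (um (a, E, c)) (up (a, E, c))) ∧
      IntegrableOn (fun s => s^2 / Real.sqrt (2 * (E - V s a c)))
        (Set.Ioo (um (a, E, c)) (up (a, E, c))) ∧
      HasFDerivAt
        (fun q : ℝ × ℝ × ℝ =>
          2 * ∫ s in Set.Ioo (um q) (up q), Real.sqrt (2 * (q.2.1 - V s q.1 q.2.2)))
        ((2 * ∫ s in Set.Ioo (um (a, E, c)) (up (a, E, c)),
            s / Real.sqrt (2 * (E - V s a c))) •
              (ContinuousLinearMap.fst ℝ ℝ (ℝ × ℝ)) +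
         (2 * ∫ s in Set.Ioo (um (a, E, c)) (up (a, E, c)),
            1 / Real.sqrt (2 * (E - V s a c))) •
              ((ContinuousLinearMap.fst ℝ ℝ ℝ).comp (ContinuousLinearMap.snd ℝ ℝ (ℝ × ℝ))) +
         ((2 * ∫ s in Set.Ioo (um (a, E, c)) (up (a, E, c)),
            s^2 / Real.sqrt (2 * (E - V s a c))) / 2) •
              ((ContinuousLinearMap.snd ℝ ℝ ℝ).comp (ContinuousLinearMap.snd ℝ ℝ (ℝ × ℝ))))
        (a, E, c) := by
  intro a E c hp
  set p : ℝ × ℝ × ℝ := (a, E, c) with hpdef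
  have hNp : N ∈ nhds p := hN.mem_nhds hp
  have hFc : Continuous F := continuous_iff_continuousAt.2 fun s => (hF s).continuousAt
  have hfc : Continuous f := hf.continuous
  obtain ⟨G, hGdef⟩ : ∃ G : ℝ → ℝ × ℝ × ℝ → ℝ,
      ∀ s q, G s q = 2 * (q.2.1 - V s q.1 q.2.2) := ⟨_, fun _ _ => rfl⟩
  have hGe : ∀ s q, G s q = 2 * (q.2.1 - (F s - q.2.2 / 2 * s ^ 2 - q.1 * s)) := fun s q => by
    rw [hGdef, hV]
  have hGcont : ∀ q, Continuous (fun s => G s q) := fun q => by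
    simp only [hGe]; fun_prop
  have hVd : ∀ s a c, HasDerivAt (fun s => V s a c) (f s - c * s - a) s := by
    intro s a c
    simp only [hV]
    have h := ((hF s).sub ((hasDerivAt_pow 2 s).const_mul (c / 2))).sub
      ((hasDerivAt_id s).const_mul a)
    refine h.congr_deriv ?_
    simp; ring
  have hGd : ∀ s q, HasDerivAt (fun s => G s q) (-2 * (f s - q.2.2 * s - q.1)) s := by
    intro s q
    simp only [hGdef]
    refine (((hVd s q.1 q.2.2).const_sub q.2.1).const_mul 2).congr_deriv ?_
    ring
  have hDc : Continuous (fun z : ℝ × (ℝ × ℝ × ℝ) =>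
      -2 * (f z.1 - z.2.2.2 * z.1 - z.2.1)) := by fun_prop
  have hzm : ∀ q ∈ N, G (um q) q = 0 := fun q hq => by
    rw [hGdef, hVm q.1 q.2.1 q.2.2 hq]; simp
  have hzp : ∀ q ∈ N, G (up q) q = 0 := fun q hq => by
    rw [hGdef, hVp q.1 q.2.1 q.2.2 hq]; simp
  have hGpos : ∀ s ∈ Set.Ioo (um p) (up p), 0 < G s p := fun s hs => by
    rw [hGdef]; linarith [hbelow a E c hp s hs]
  have hlt : um p < up p := horder p hp
  have humc : ContinuousAt um p := hum.continuousOn.continuousAt hNp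
  have hupc : ContinuousAt up p := hup.continuousOn.continuousAt hNp
  have hDm : 0 < -2 * (f (um p) - p.2.2 * um p - p.1) := by
    refine lt_of_le_of_ne (deriv_nonneg_of_pos_right _ _ _ _ hlt (hGd _ p) (hzm p hp) hGpos) ?_
    have h := hVm' a E c hp
    rw [(hVd _ _ _).deriv] at h
    intro h'
    apply h
    simp only [← hpdef]
    simp only [hpdef] at h' ⊢
    linarith
  have hDp : -2 * (f (up p) - p.2.2 * up p - p.1) < 0 := by
    refine lt_of_le_of_ne (deriv_nonpos_of_pos_left _ _ _ _ hlt (hGd _ p) (hzp p hp) hGpos) ?_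
    have h := hVp' a E c hp
    rw [(hVd _ _ _).deriv] at h
    intro h'
    apply h
    simp only [hpdef] at h' ⊢
    linarith
  -- `[A, B]` is the fixed interval of integration.
  obtain ⟨A, hA, hAneg⟩ := exists_neg_left_of_deriv_pos G
    (fun s q => -2 * (f s - q.2.2 * s - q.1)) hGd hDc um p humc
    (by filter_upwards [hNp] with q hq using hzm q hq) hDm
  obtain ⟨B, hB, hBneg⟩ := exists_neg_right_of_deriv_neg G
    (fun s q => -2 * (f s - q.2.2 * s - q.1)) hGd hDc up p hupc
    (by filter_upwards [hNp] with q hq using hzp q hq) hDp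
  have hnegm := hAneg.self_of_nhds
  have hnegp := hBneg.self_of_nhds
  have htri : ∀ s ∈ Set.Icc A B, s ≠ um p → s ≠ up p →
      (s ∈ Set.Ioo (um p) (up p) ∧ 0 < G s p) ∨ (s ∉ Set.Ioo (um p) (up p) ∧ G s p < 0) := by
    intro s hs h1 h2
    rcases lt_or_gt_of_ne h1 with h1 | h1
    · exact Or.inr ⟨fun h => by linarith [h.1], hnegm s ⟨hs.1, h1⟩⟩
    · rcases lt_or_gt_of_ne h2 with h2 | h2
      · exact Or.inl ⟨⟨h1, h2⟩, hGpos s ⟨h1, h2⟩⟩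
      · exact Or.inr ⟨fun h => by linarith [h.2], hnegp s ⟨h2, hs.2⟩⟩
  have hsub : Set.Ioo (um p) (up p) ⊆ Set.Icc A B := fun s hs =>
    ⟨by linarith [hs.1], by linarith [hs.2]⟩
  have hint : IntegrableOn (fun s => 1 / √|G s p|) (Set.Icc A B) := by
    refine integrableOn_inv_sqrt_abs _ (hGcont p) _ isCompact_Icc ?_
    intro x hx hx0
    refine ⟨_, ?_, hGd x p⟩
    by_cases h1 : x = um p
    · rw [h1]; exact hDm.ne'
    by_cases h2 : x = up p
    · rw [h2]; exact hDp.ne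
    rcases htri x hx h1 h2 with h | h <;> linarith [h.2]
  -- Where `G s p ≤ 0`, the square root is `0` and `w s / 0 = 0`, so the quotient is dominated by
  -- `|w s| / √|G s p|` on all of `[A, B]`.
  have hintw : ∀ w : ℝ → ℝ, Continuous w →
      IntegrableOn (fun s => w s / √(G s p)) (Set.Icc A B) := by
    intro w hw
    have hGm := (hGcont p).measurable
    have h := IntegrableOn.continuousOn_mul (hw.continuousOn (s := Set.Icc A B)) hint isCompact_Icc
    refine Integrable.mono h ?_ ?_
    · have := hw.measurable
      exact Measurable.aestronglyMeasurable (by fun_prop)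
    · filter_upwards with s
      rw [mul_one_div, norm_div, norm_div]
      rcases le_or_gt (G s p) 0 with h0 | h0
      · rw [Real.sqrt_eq_zero_of_nonpos h0]
        simp only [norm_zero, div_zero]
        positivity
      · rw [abs_of_pos h0]
  -- The same junk value makes the quotient vanish off the orbit interval.
  have hinteq : ∀ w : ℝ → ℝ, ∫ s in Set.Icc A B, w s / √(G s p) =
      ∫ s in Set.Ioo (um p) (up p), w s / √(G s p) := by
    intro w
    refine setIntegral_eq_of_subset_of_forall_sdiff_eq_zero measurableSet_Icc hsub ?_
    intro s hs
    by_cases h1 : s = um p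
    · rw [h1, hzm p hp]; simp
    by_cases h2 : s = up p
    · rw [h2, hzp p hp]; simp
    rcases htri s hs.1 h1 h2 with h | h
    · exact absurd h.1 hs.2
    · rw [Real.sqrt_eq_zero_of_nonpos h.2.le, div_zero]
  have i1 := hintw (fun _ => 1) continuous_const
  have i2 := hintw (fun s => s) continuous_id
  have i3 := hintw (fun s => s ^ 2) (continuous_pow 2)
  have hGp : ∀ s, 2 * (E - V s a c) = G s p := fun s => (hGdef s p).symm
  simp only [hGp, ← hGdef]
  refine ⟨i1.mono_set hsub, i2.mono_set hsub, i3.mono_set hsub, ?_⟩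
  set L1 := ContinuousLinearMap.fst ℝ ℝ (ℝ × ℝ)
  set L2 := (ContinuousLinearMap.fst ℝ ℝ ℝ).comp (ContinuousLinearMap.snd ℝ ℝ (ℝ × ℝ))
  set L3 := (ContinuousLinearMap.snd ℝ ℝ ℝ).comp (ContinuousLinearMap.snd ℝ ℝ (ℝ × ℝ))
  -- The pointwise derivative; where `G s p < 0` it is `0`, again by division by zero.
  let F' : ℝ → (ℝ × ℝ × ℝ) →L[ℝ] ℝ := fun s =>
    (s / √(G s p)) • L1 + (1 / √(G s p)) • L2 + (s ^ 2 / √(G s p)) • ((1 / 2 : ℝ) • L3)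
  have hF'int : Integrable F' (volume.restrict (Set.Icc A B)) :=
    ((i2.smul_const L1).add (i1.smul_const L2)).add (i3.smul_const ((1 / 2 : ℝ) • L3))
  have hne : ∀ᵐ s ∂(volume.restrict (Set.Icc A B)), G s p ≠ 0 := by
    filter_upwards [ae_restrict_mem measurableSet_Icc,
      ae_restrict_of_ae (Measure.ae_ne volume (um p)),
      ae_restrict_of_ae (Measure.ae_ne volume (up p))] with s hs h1 h2
    rcases htri s hs h1 h2 with h | h
    · exact h.2.ne'
    · exact h.2.ne
  have hlip : ∀ s q, |G s q - G s p| ≤ (2 * |s| + 2 + s ^ 2) * ‖q - p‖ := by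
    intro s q
    have e : G s q - G s p
        = 2 * s * (q - p).1 + 2 * (q - p).2.1 + s ^ 2 * (q - p).2.2 := by
      rw [hGe, hGe]; simp only [Prod.fst_sub, Prod.snd_sub]; ring
    have n1 : |(q - p).1| ≤ ‖q - p‖ := norm_fst_le (q - p)
    have n2 : |(q - p).2.1| ≤ ‖q - p‖ := (norm_fst_le (q - p).2).trans (norm_snd_le (q - p))
    have n3 : |(q - p).2.2| ≤ ‖q - p‖ := (norm_snd_le (q - p).2).trans (norm_snd_le (q - p))
    rw [e]
    calc _ ≤ |2 * s * (q - p).1| + |2 * (q - p).2.1| + |s ^ 2 * (q - p).2.2| := abs_add_three _ _ _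
      _ = 2 * |s| * |(q - p).1| + 2 * |(q - p).2.1| + s ^ 2 * |(q - p).2.2| := by
        simp only [abs_mul, abs_pow, sq_abs, abs_two]
      _ ≤ 2 * |s| * ‖q - p‖ + 2 * ‖q - p‖ + s ^ 2 * ‖q - p‖ := by gcongr
      _ = _ := by ring
  have hGq : ∀ s, HasFDerivAt (fun q => G s q) ((2 * s) • L1 + (2 : ℝ) • L2 + (s ^ 2) • L3) p := by
    intro s
    have h := (((2 * s) • L1 + (2 : ℝ) • L2 + (s ^ 2) • L3).hasFDerivAt (x := p)).add_const
      (-2 * F s)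
    refine h.congr_of_eventuallyEq (Filter.Eventually.of_forall fun q => ?_)
    simp only [hGe, L1, L2, L3]
    simp
    ring
  have hbint : IntegrableOn (fun s => (2 * |s| + 2 + s ^ 2) * (1 / √|G s p|)) (Set.Icc A B) :=
    IntegrableOn.continuousOn_mul (by fun_prop) hint isCompact_Icc
  have main := (hasFDerivAt_integral_of_dominated_loc_of_lip'
    (μ := volume.restrict (Set.Icc A B)) (F := fun q s => √(G s q)) (F' := F') (x₀ := p)
    (s := Set.univ) (bound := fun s => (2 * |s| + 2 + s ^ 2) * (1 / √|G s p|)) Filter.univ_mem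
    (fun q _ => ((hGcont q).sqrt).aestronglyMeasurable)
    ((hGcont p).sqrt.continuousOn.integrableOn_compact isCompact_Icc)
    hF'int.aestronglyMeasurable
    (by
      filter_upwards [hne] with s hs q _
      refine (abs_sqrt_sub_sqrt_le _ _ hs).trans ?_
      rw [div_eq_mul_one_div, mul_right_comm]
      exact mul_le_mul_of_nonneg_right (hlip s q) (by positivity))
    hbint
    (by
      filter_upwards [hne] with s hs
      rcases lt_or_gt_of_ne hs with h | h
      · have hF0' : F' s = 0 := by
          simp [F', Real.sqrt_eq_zero_of_nonpos h.le]
        rw [hF0']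
        refine (hasFDerivAt_const (0 : ℝ) p).congr_of_eventuallyEq ?_
        filter_upwards [(hGq s).continuousAt.eventually (gt_mem_nhds h)] with q hq
        exact Real.sqrt_eq_zero_of_nonpos hq.le
      · refine ((hGq s).sqrt hs).congr_fderiv ?_
        have h' : √(G s p) ≠ 0 := (Real.sqrt_pos.2 h).ne'
        ext <;> simp [F'] <;> field_simp)).2
  -- On `[A, B]` outside `(um q, up q)` the function `G(·; q)` is nonpositive, so its root is `0`.
  have hKeq : (fun q => 2 * ∫ s in Set.Ioo (um q) (up q), √(G s q)) =ᶠ[nhds p]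
      fun q => 2 * ∫ s in Set.Icc A B, √(G s q) := by
    filter_upwards [hNp, hAneg, hBneg, humc.eventually (lt_mem_nhds hA),
      hupc.eventually (gt_mem_nhds hB)] with q hqN hqA hqB hq1 hq2
    congr 1
    symm
    refine setIntegral_eq_of_subset_of_forall_sdiff_eq_zero measurableSet_Icc
      (fun s hs => ⟨by linarith [hs.1], by linarith [hs.2]⟩) ?_
    rintro s ⟨hs, hs'⟩
    apply Real.sqrt_eq_zero_of_nonpos
    rcases lt_trichotomy s (um q) with h | h | h
    · exact (hqA s ⟨hs.1, h⟩).le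
    · rw [h, hzm q hqN]
    rcases lt_trichotomy s (up q) with h' | h' | h'
    · exact absurd ⟨h, h'⟩ hs'
    · rw [h', hzp q hqN]
    · exact (hqB s ⟨h', hs.2⟩).le
  refine ((main.const_mul 2).congr_of_eventuallyEq hKeq).congr_fderiv ?_
  have hI : ∫ s in Set.Icc A B, F' s =
      (∫ s in Set.Ioo (um p) (up p), s / √(G s p)) • L1 +
      (∫ s in Set.Ioo (um p) (up p), 1 / √(G s p)) • L2 +
      (∫ s in Set.Ioo (um p) (up p), s ^ 2 / √(G s p)) • ((1 / 2 : ℝ) • L3) := by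
    rw [← hinteq, ← hinteq, ← hinteq,
      ← integral_smul_const (𝕜 := ℝ) (fun s => s / √(G s p)) L1,
      ← integral_smul_const (𝕜 := ℝ) (fun s => 1 / √(G s p)) L2,
      ← integral_smul_const (𝕜 := ℝ) (fun s => s ^ 2 / √(G s p)) ((1 / 2 : ℝ) • L3),
      ← integral_add, ← integral_add]
    · exact (i2.smul_const L1).add (i1.smul_const L2)
    · exact i3.smul_const _
    · exact i2.smul_const L1
    · exact i1.smul_const L2
  rw [hI]
  module
end

section
/- Let f : ℝ → ℝ be C³ with antiderivative F (F' = f, F(0) = 0) and set V(s; a, c) = F(s) − (c/2)s² − a·s; let Ω ⊆ ℝ³ be open, let u_− < u_+ be C¹ on Ω with V(u_±(a,E,c); a, c) = E, ∂V/∂s(u_−; a, c) < 0, ∂V/∂s(u_+; a, c) > 0, and V(s; a, c) < E for s ∈ (u_−, u_+); and let u(x; a, E, c) be jointly C³ and satisfy, for all (a,E,c) ∈ Ω and x ∈ ℝ: u_xx + f(u) − c·u = a; (1/2)u_x² + F(u) − (c/2)u² − a·u = E; u(0; a,E,c) = u_−(a,E,c); u_x(0; a,E,c) = 0. Then for every (a,E,c)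 ∈ Ω, the 3×3 matrix whose three columns are (v(0), v_x(0), v_xx(0))ᵀ for v = u_x, v = ∂u/∂a, and v = ∂u/∂E respectively, has determinant equal to −1. -/
/-!
Put `g = ∂V/∂s(u_-; a, c) = f(u_-) - c u_- - a` and `k = f'(u_-) - c`. The function `u` is
`C³` jointly, so `∂ₓ` commutes with `∂ₐ` and `∂_E` (`deriv_swap`, `deriv_deriv_swap`); hence the last
two rows of the parameter columns are the parameter derivatives of `u_x(0) = 0` and of
`u_xx(0) = a - f(u_-) + c u_-`. The matrix is therefore

  `0    A        B`
  `-g   0        0`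
  `*    1 - kA   -kB`

with `A = ∂ₐ u_-`, `B = ∂_E u_-`, and its determinant is `-g B`. Differentiating `V(u_-; a, c) = E`,
which is the energy identity at `x = 0`, in `E` gives `g B = 1`.
-/

open Filter Topology

private lemma hasDerivAt_slice {w : ℝ → ℝ → ℝ} {S : Set ℝ} (hS : IsOpen S) {n : WithTop ℕ∞}
    (hn : n ≠ 0)
    (hw : ContDiffOn ℝ n (fun q : ℝ × ℝ => w q.1 q.2) (Set.univ ×ˢ S)) (x : ℝ) {t : ℝ} (ht : t ∈ S) :
    HasDerivAt (fun y => w y t) (fderiv ℝ (fun q : ℝ × ℝ => w q.1 q.2) (x, t) (1, 0)) x ∧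
    HasDerivAt (fun s => w x s) (fderiv ℝ (fun q : ℝ × ℝ => w q.1 q.2) (x, t) (0, 1)) t := by
  have hd : HasFDerivAt (fun q : ℝ × ℝ => w q.1 q.2)
      (fderiv ℝ (fun q : ℝ × ℝ => w q.1 q.2) (x, t)) (x, t) :=
    ((hw.contDiffAt ((isOpen_univ.prod hS).mem_nhds ⟨trivial, ht⟩)).differentiableAt
      hn).hasFDerivAt
  constructor
  · have h1 : HasDerivAt (fun y : ℝ => (y, t)) ((1 : ℝ), (0 : ℝ)) x :=
      (hasDerivAt_id x).prodMk (hasDerivAt_const x t)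
    exact HasFDerivAt.comp_hasDerivAt (f := fun y : ℝ => (y, t)) x hd h1
  · have h1 : HasDerivAt (fun s : ℝ => (x, s)) ((0 : ℝ), (1 : ℝ)) t :=
      (hasDerivAt_const t x).prodMk (hasDerivAt_id t)
    exact HasFDerivAt.comp_hasDerivAt (f := fun s : ℝ => (x, s)) t hd h1

private lemma contDiffOn_deriv_fst {w : ℝ → ℝ → ℝ} {S : Set ℝ} (hS : IsOpen S)
    (hw : ContDiffOn ℝ 3 (fun q : ℝ × ℝ => w q.1 q.2) (Set.univ ×ˢ S)) :
    ContDiffOn ℝ 2 (fun q : ℝ × ℝ => deriv (fun y => w y q.2) q.1) (Set.univ ×ˢ S) := by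
  have h : ContDiffOn ℝ 2 (fderiv ℝ (fun q : ℝ × ℝ => w q.1 q.2)) (Set.univ ×ˢ S) :=
    hw.fderiv_of_isOpen (isOpen_univ.prod hS) (by norm_num)
  refine (h.clm_apply (contDiffOn_const (c := ((1 : ℝ), (0 : ℝ))))).congr ?_
  rintro ⟨x, t⟩ ⟨-, ht⟩
  exact (hasDerivAt_slice hS (by norm_num) hw x ht).1.deriv

/-- Mixed partial derivatives of a function that is `C²` on `ℝ × S`, `S` open, commute. -/
private lemma deriv_swap {w : ℝ → ℝ → ℝ} {S : Set ℝ} (hS : IsOpen S)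
    (hw : ContDiffOn ℝ 2 (fun q : ℝ × ℝ => w q.1 q.2) (Set.univ ×ˢ S)) (x : ℝ) {t : ℝ}
    (ht : t ∈ S) :
    deriv (fun y => deriv (fun s => w y s) t) x = deriv (fun s => deriv (fun y => w y s) x) t := by
  set W : ℝ × ℝ → ℝ := fun q => w q.1 q.2 with hW
  have hnhds : (Set.univ : Set ℝ) ×ˢ S ∈ 𝓝 (x, t) := (isOpen_univ.prod hS).mem_nhds ⟨trivial, ht⟩
  have hcd : ContDiffAt ℝ 2 W (x, t) := hw.contDiffAt hnhds
  have hD : ContDiffOn ℝ 1 (fderiv ℝ W) (Set.univ ×ˢ S) :=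
    hw.fderiv_of_isOpen (isOpen_univ.prod hS) (by norm_num)
  have hd : HasFDerivAt (fderiv ℝ W) (fderiv ℝ (fderiv ℝ W) (x, t)) (x, t) :=
    ((hD.contDiffAt hnhds).differentiableAt (by norm_num)).hasFDerivAt
  have hsymm : IsSymmSndFDerivAt ℝ W (x, t) := hcd.isSymmSndFDerivAt (by simp)
  have e1 : (fun y => deriv (fun s => w y s) t) = fun y => fderiv ℝ W (y, t) (0, 1) := by
    funext y
    exact (hasDerivAt_slice hS (by norm_num) hw y ht).2.deriv
  have e2 : (fun s => deriv (fun y => w y s) x) =ᶠ[𝓝 t] fun s => fderiv ℝ W (x, s) (1, 0) := by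
    filter_upwards [hS.mem_nhds ht] with s hs
    exact (hasDerivAt_slice hS (by norm_num) hw x hs).1.deriv
  have h1 : HasDerivAt (fun y => fderiv ℝ W (y, t)) (fderiv ℝ (fderiv ℝ W) (x, t) (1, 0)) x :=
    HasFDerivAt.comp_hasDerivAt (f := fun y : ℝ => (y, t)) x hd
      ((hasDerivAt_id x).prodMk (hasDerivAt_const x t))
  have h2 : HasDerivAt (fun s => fderiv ℝ W (x, s)) (fderiv ℝ (fderiv ℝ W) (x, t) (0, 1)) t :=
    HasFDerivAt.comp_hasDerivAt (f := fun s : ℝ => (x, s)) t hd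
      ((hasDerivAt_const t x).prodMk (hasDerivAt_id t))
  have h1' : HasDerivAt (fun y => fderiv ℝ W (y, t) (0, 1))
      (fderiv ℝ (fderiv ℝ W) (x, t) (1, 0) (0, 1)) x := by
    simpa using h1.clm_apply (hasDerivAt_const x ((0 : ℝ), (1 : ℝ)))
  have h2' : HasDerivAt (fun s => fderiv ℝ W (x, s) (1, 0))
      (fderiv ℝ (fderiv ℝ W) (x, t) (0, 1) (1, 0)) t := by
    simpa using h2.clm_apply (hasDerivAt_const t ((1 : ℝ), (0 : ℝ)))
  rw [e1, e2.deriv_eq, h1'.deriv, h2'.deriv]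
  exact hsymm.eq _ _

private lemma deriv_deriv_swap {w : ℝ → ℝ → ℝ} {S : Set ℝ} (hS : IsOpen S)
    (hw : ContDiffOn ℝ 3 (fun q : ℝ × ℝ => w q.1 q.2) (Set.univ ×ˢ S)) (x : ℝ) {t : ℝ}
    (ht : t ∈ S) :
    deriv (deriv (fun y => deriv (fun s => w y s) t)) x
      = deriv (fun s => deriv (deriv (fun y => w y s)) x) t := by
  have e : deriv (fun y => deriv (fun s => w y s) t)
      = fun y => deriv (fun s => deriv (fun z => w z s) y) t := by
    funext y
    exact deriv_swap hS (hw.of_le (by norm_num)) y ht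
  rw [e]
  exact deriv_swap (w := fun y s => deriv (fun z => w z s) y) hS (contDiffOn_deriv_fst hS hw) x ht

/-- The lower two entries of the column of a parameter `t` (which stands for `a` or for `E`), for a
family `w` satisfying `w_xx(0, t) = α t - f (w(0, t)) + c w(0, t)` and `w_x(0, t) = 0`. -/
private lemma parameter_column {w : ℝ → ℝ → ℝ} {S : Set ℝ} (hS : IsOpen S)
    (hw : ContDiffOn ℝ 3 (fun q : ℝ × ℝ => w q.1 q.2) (Set.univ ×ˢ S)) {f : ℝ → ℝ}
    (hf : Differentiable ℝ f) {c α' : ℝ} {α : ℝ → ℝ} {t : ℝ} (ht : t ∈ S) (hα : HasDerivAt α α' t)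
    (h1 : ∀ s ∈ S, deriv (fun y => w y s) 0 = 0)
    (h2 : ∀ s ∈ S, deriv (deriv (fun y => w y s)) 0 + f (w 0 s) - c * w 0 s = α s) :
    deriv (fun y => deriv (fun s => w y s) t) 0 = 0 ∧
    deriv (deriv (fun y => deriv (fun s => w y s) t)) 0
      = α' - (deriv f (w 0 t) - c) * deriv (fun s => w 0 s) t := by
  constructor
  · have e : (fun s => deriv (fun y => w y s) 0) =ᶠ[𝓝 t] fun _ => (0 : ℝ) := by
      filter_upwards [hS.mem_nhds ht] with s hs using h1 s hs
    rw [deriv_swap hS (hw.of_le (by norm_num)) 0 ht, e.deriv_eq, deriv_const]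
  · have e : (fun s => deriv (deriv (fun y => w y s)) 0) =ᶠ[𝓝 t]
        fun s => α s - f (w 0 s) + c * w 0 s := by
      filter_upwards [hS.mem_nhds ht] with s hs
      linarith [h2 s hs]
    have hd : HasDerivAt (fun s => w 0 s) (deriv (fun s => w 0 s) t) t :=
      (hasDerivAt_slice hS (by norm_num) hw 0 ht).2.differentiableAt.hasDerivAt
    have hfd : HasDerivAt (fun s => f (w 0 s)) (deriv f (w 0 t) * deriv (fun s => w 0 s) t) t :=
      HasDerivAt.comp t (hf (w 0 t)).hasDerivAt hd
    rw [deriv_deriv_swap hS hw 0 ht, e.deriv_eq]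
    refine HasDerivAt.deriv (((hα.sub hfd).add (hd.const_mul c)).congr_deriv ?_)
    ring

/-- The Wronskian matrix at `x = 0` of the three solutions
`u_x`, `u_a`, `u_E` of the variational equations of the gKdV profile ODE
(columns `(v(0), v_x(0), v_xx(0))ᵀ`) has determinant `−1`. -/
theorem gkdv_wronskian_at_zero
    (f F : ℝ → ℝ) (hf : ContDiff ℝ 3 f)
    (hF : ∀ s, HasDerivAt F (f s) s) (hF0 : F 0 = 0)
    (V : ℝ → ℝ → ℝ → ℝ) (hV : ∀ s a c, V s a c = F s - c/2 * s^2 - a * s)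
    (Ω : Set (ℝ × ℝ × ℝ)) (hΩ : IsOpen Ω)
    (um up : ℝ × ℝ × ℝ → ℝ)
    (hum : ContDiffOn ℝ 1 um Ω) (hup : ContDiffOn ℝ 1 up Ω)
    (horder : ∀ p ∈ Ω, um p < up p)
    (hVm : ∀ a E c : ℝ, (a, E, c) ∈ Ω → V (um (a, E, c)) a c = E)
    (hVp : ∀ a E c : ℝ, (a, E, c) ∈ Ω → V (up (a, E, c)) a c = E)
    (hVm' : ∀ a E c : ℝ, (a, E, c) ∈ Ω → deriv (fun s => V s a c) (um (a, E, c)) < 0)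
    (hVp' : ∀ a E c : ℝ, (a, E, c) ∈ Ω → 0 < deriv (fun s => V s a c) (up (a, E, c)))
    (hbelow : ∀ a E c : ℝ, (a, E, c) ∈ Ω →
      ∀ s ∈ Set.Ioo (um (a, E, c)) (up (a, E, c)), V s a c < E)
    (T : ℝ × ℝ × ℝ → ℝ) (hT : ContDiffOn ℝ 1 T Ω) (hTpos : ∀ p ∈ Ω, 0 < T p)
    (u : ℝ → ℝ → ℝ → ℝ → ℝ)
    (hu : ContDiffOn ℝ 3 (fun q : ℝ × ℝ × ℝ × ℝ => u q.1 q.2.1 q.2.2.1 q.2.2.2)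
      ((Set.univ : Set ℝ) ×ˢ Ω))
    (hprofile : ∀ a E c : ℝ, (a, E, c) ∈ Ω → ∀ x : ℝ,
      deriv (deriv (fun y => u y a E c)) x + f (u x a E c) - c * u x a E c = a)
    (henergy : ∀ a E c : ℝ, (a, E, c) ∈ Ω → ∀ x : ℝ,
      1/2 * (deriv (fun y => u y a E c) x)^2 + F (u x a E c)
        - c/2 * (u x a E c)^2 - a * u x a E c = E)
    (hperiodic : ∀ a E c : ℝ, (a, E, c) ∈ Ω → ∀ x : ℝ,
      u (x + T (a, E, c)) a E c = u x a E c)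
    (hinit : ∀ a E c : ℝ, (a, E, c) ∈ Ω → u 0 a E c = um (a, E, c))
    (hinit' : ∀ a E c : ℝ, (a, E, c) ∈ Ω → deriv (fun y => u y a E c) 0 = 0) :
    ∀ a E c : ℝ, (a, E, c) ∈ Ω →
      Matrix.det
        !![deriv (fun y => u y a E c) 0,
             deriv (fun a' => u 0 a' E c) a,
             deriv (fun E' => u 0 a E' c) E;
           deriv (fun y => deriv (fun z => u z a E c) y) 0,
             deriv (fun y => deriv (fun a' => u y a' E c) a) 0,
             deriv (fun y => deriv (fun E' => u y a E' c) E) 0;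
           deriv (deriv (fun y => deriv (fun z => u z a E c) y)) 0,
             deriv (deriv (fun y => deriv (fun a' => u y a' E c) a)) 0,
             deriv (deriv (fun y => deriv (fun E' => u y a E' c) E)) 0]
        = -1 := by
  intro a E c hp
  have hSa : IsOpen {s : ℝ | (s, E, c) ∈ Ω} := hΩ.preimage (by fun_prop)
  have hSE : IsOpen {s : ℝ | (a, s, c) ∈ Ω} := hΩ.preimage (by fun_prop)
  have hwa : ContDiffOn ℝ 3 (fun q : ℝ × ℝ => u q.1 q.2 E c)
      (Set.univ ×ˢ {s : ℝ | (s, E, c) ∈ Ω}) :=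
    hu.comp (f := fun q : ℝ × ℝ => (q.1, q.2, E, c)) (by fun_prop) (fun q hq => ⟨trivial, hq.2⟩)
  have hwE : ContDiffOn ℝ 3 (fun q : ℝ × ℝ => u q.1 a q.2 c)
      (Set.univ ×ˢ {s : ℝ | (a, s, c) ∈ Ω}) :=
    hu.comp (f := fun q : ℝ × ℝ => (q.1, a, q.2, c)) (by fun_prop) (fun q hq => ⟨trivial, hq.2⟩)
  have hfd : Differentiable ℝ f := hf.differentiable (by norm_num)
  obtain ⟨ha1, ha2⟩ := parameter_column (w := fun x s => u x s E c) (c := c) hSa hwa hfd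
    (t := a) hp (hasDerivAt_id a) (fun s hs => hinit' s E c hs) (fun s hs => hprofile s E c hs 0)
  obtain ⟨hE1, hE2⟩ := parameter_column (w := fun x s => u x a s c) (c := c) hSE hwE hfd
    (t := E) hp (hasDerivAt_const E a) (fun s hs => hinit' a s c hs)
    (fun s hs => hprofile a s c hs 0)
  -- Differentiating the energy identity at `x = 0` with respect to `E`.
  have hB : (f (u 0 a E c) - c * u 0 a E c - a) * deriv (fun E' => u 0 a E' c) E = 1 := by
    have hd : HasDerivAt (fun s => u 0 a s c) (deriv (fun s => u 0 a s c) E) E :=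
      (hasDerivAt_slice (w := fun x s => u x a s c) hSE (by norm_num) hwE 0
        hp).2.differentiableAt.hasDerivAt
    have hFd : HasDerivAt (fun s => F (u 0 a s c))
        (f (u 0 a E c) * deriv (fun s => u 0 a s c) E) E := HasDerivAt.comp E (hF _) hd
    have e : (fun s => F (u 0 a s c) - c / 2 * (u 0 a s c) ^ 2 - a * u 0 a s c) =ᶠ[𝓝 E]
        fun s => s := by
      filter_upwards [hSE.mem_nhds hp] with s hs
      have := henergy a s c hs 0
      rw [hinit' a s c hs] at this
      linarith
    have h := ((hFd.sub ((hd.pow 2).const_mul (c / 2))).sub (hd.const_mul a)).unique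
      ((hasDerivAt_id E).congr_of_eventuallyEq e)
    norm_num at h
    linarith
  have hxx := hprofile a E c hp 0
  rw [Matrix.det_fin_three]
  simp only [Matrix.of_apply, Matrix.cons_val', Matrix.cons_val_zero, Matrix.cons_val_one,
    Matrix.cons_val]
  rw [ha1, ha2, hE1, hE2, hinit' a E c hp]
  change deriv (fun y => deriv (fun z => u z a E c) y) 0 + _ - _ = _ at hxx
  linear_combination deriv (fun E' => u 0 a E' c) E * hxx - hB
end

section
/- Let f : ℝ → ℝ be C³ and let u(x; a, E, c) be a periodic traveling wave family of the gKdV equation as follows: Ω ⊆ ℝ³ open; u_− < u_+ C¹ on Ω simple roots of E = V(·; a, c) where V(s; a, c) = F(s) − (c/2)s² − a·s with F' = f, F(0) = 0; T(a,E,c) > 0 C¹; u jointly C³ satisfying u_xx + f(u) − c·u = a, (1/2)u_x² + F(u) − (c/2)u² − a·u = E, u(x + T) = u(x), u(0) = u_−, u_x(0) = 0. Let Y(x) be the 3×3 matrix solution of Y_x = H(x)·Y, Y(0) = I, where H(x) has rows (0, 1, 0), (0, 0, 1), (−f''(u(x))·u_x(x), c − f'(u(x)), 0), and set M₀ = Y(T).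 Then M₀·ξ = ξ for ξ = (u_x(0), u_xx(0), u_xxx(0))ᵀ and M₀·η = η for η = (w(0), w_x(0), w_xx(0))ᵀ, where w = (∂T/∂E)·(∂u/∂a) − (∂T/∂a)·(∂u/∂E). In particular det(M₀ − I) = 0. -/
/-! Both vectors are initial data `(v, v', v'')(0)` of a function `v` obtained by differentiating the
family `U(x, a, E, c)` in a fixed direction `e` of the four-dimensional space of `(x, a, E, c)`:
`e = (1, 0, 0, 0)` gives `v = u_x`, and `e = (0, T_E, -T_a, 0)` gives `v = w`.
Whenever `e` has no `c`-component, differentiating the profile equation `U_xx = a + c U - f(U)` in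
the direction `e` and exchanging derivatives gives `v'' = e_a + c v - f'(u) v`, and one more
`x`-derivative turns this into `v''' = -f''(u) u_x v + (c - f'(u)) v'`
(`directional_derivative_ode`). Hence `(v, v', v'')` solves the first-order system, and by
uniqueness for linear systems it equals `Y(x)` applied to its value at `0`
(`eq_fundamental_mulVec`).

It remains to see that `v` is `T`-periodic. For `u_x` this is clear. The direction
`(T_E, -T_a, 0)` is tangent to the level set of the period `T`, so differentiating
`U(x + T(p), p) = U(x, p)` along it produces no `u_x T'` term, and `w` is periodic.

Finally `u_xx(0) = -V'(u_-) > 0`, so the first fixed vector is nonzero and `det (M₀ - I) = 0`. -/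

open Matrix in
/-- Uniqueness for linear systems: a solution is the fundamental matrix applied to its initial
value. -/
lemma eq_fundamental_mulVec {H Y : ℝ → Matrix (Fin 3) (Fin 3) ℝ} (hH : Continuous H)
    (hY0 : Y 0 = 1)
    (hY : ∀ (x : ℝ) (i j : Fin 3), HasDerivAt (fun y => Y y i j) ((H x * Y x) i j) x)
    {W : ℝ → Fin 3 → ℝ} (hW : ∀ x, HasDerivAt W (H x *ᵥ W x) x) {t : ℝ} (ht : 0 ≤ t) :
    Y t *ᵥ W 0 = W t := by
  -- `L x` is the continuous linear map `v ↦ H x *ᵥ v`, whose norm is bounded on `[0, t]`.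
  let L : ℝ → ((Fin 3 → ℝ) →L[ℝ] (Fin 3 → ℝ)) :=
    fun x => LinearMap.toContinuousLinearMap (Matrix.toLin' (H x))
  have hL : Continuous L := by
    have h1 : Continuous (fun A : Matrix (Fin 3) (Fin 3) ℝ =>
        LinearMap.toContinuousLinearMap (Matrix.toLin' A)) :=
      LinearMap.continuous_of_finiteDimensional
        ((LinearMap.toContinuousLinearMap
          (𝕜 := ℝ) (E := Fin 3 → ℝ) (F' := Fin 3 → ℝ)).toLinearMap ∘ₗ
          (Matrix.toLin' (R := ℝ) (m := Fin 3) (n := Fin 3)).toLinearMap)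
    exact h1.comp hH
  obtain ⟨K, hK⟩ := isCompact_Icc.exists_bound_of_continuousOn
    (s := Set.Icc 0 t) (f := L) hL.continuousOn
  have hYW : ∀ x, HasDerivAt (fun y => Y y *ᵥ W 0) (H x *ᵥ (Y x *ᵥ W 0)) x := by
    intro x
    rw [hasDerivAt_pi]
    intro i
    rw [Matrix.mulVec_mulVec]
    simp only [Matrix.mulVec, dotProduct]
    exact HasDerivAt.fun_sum fun j _ => (hY x i j).mul_const _
  refine ODE_solution_unique_of_mem_Icc_right (v := fun x w => L x w) (s := fun _ => Set.univ)
    (K := K.toNNReal) (a := 0) (b := t) (f := fun y => Y y *ᵥ W 0) (g := W)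
    ?_ ?_ ?_ (fun _ _ => Set.mem_univ _) ?_ ?_ (fun _ _ => Set.mem_univ _) ?_
    (Set.right_mem_Icc.2 ht)
  · intro x hx
    refine ((L x).lipschitz.weaken ?_).lipschitzOnWith
    rw [← NNReal.coe_le_coe]
    exact (hK x (Set.Ico_subset_Icc_self hx)).trans (Real.le_coe_toNNReal K)
  · exact fun x _ => (hYW x).continuousAt.continuousWithinAt
  · exact fun x _ => (hYW x).hasDerivWithinAt
  · exact fun x _ => (hW x).continuousAt.continuousWithinAt
  · exact fun x _ => (hW x).hasDerivWithinAt
  · simp [hY0]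

open Matrix in
/-- The monodromy matrix of a third-order scalar equation `v''' = g v + h v'` fixes the initial data
of every `τ`-periodic solution. -/
lemma monodromy_mulVec_periodic {H Y : ℝ → Matrix (Fin 3) (Fin 3) ℝ} {g h : ℝ → ℝ}
    (hg : Continuous g) (hh : Continuous h)
    (hH : ∀ x, H x = !![0, 1, 0; 0, 0, 1; g x, h x, 0]) (hY0 : Y 0 = 1)
    (hY : ∀ (x : ℝ) (i j : Fin 3), HasDerivAt (fun y => Y y i j) ((H x * Y x) i j) x)
    {v : ℝ → ℝ} (h1 : Differentiable ℝ v) (h2 : Differentiable ℝ (deriv v))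
    (h3 : ∀ x, HasDerivAt (deriv (deriv v)) (g x * v x + h x * deriv v x) x)
    {τ : ℝ} (hτ : 0 ≤ τ) (hper : ∀ x, v (x + τ) = v x) :
    Y τ *ᵥ ![v 0, deriv v 0, deriv (deriv v) 0] = ![v 0, deriv v 0, deriv (deriv v) 0] := by
  have hHc : Continuous H := by
    rw [funext hH]
    refine continuous_matrix fun i j => ?_
    fin_cases i <;> fin_cases j <;> simp <;> fun_prop
  have hper1 : ∀ x, deriv v (x + τ) = deriv v x := fun x => by
    rw [← deriv_comp_add_const]; exact congrArg (deriv · x) (funext hper)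
  have hper2 : ∀ x, deriv (deriv v) (x + τ) = deriv (deriv v) x := fun x => by
    rw [← deriv_comp_add_const]; exact congrArg (deriv · x) (funext hper1)
  have key := eq_fundamental_mulVec hHc hY0 hY
    (W := fun x => ![v x, deriv v x, deriv (deriv v) x]) (fun x => by
      rw [hasDerivAt_pi, hH]
      intro i
      fin_cases i
      · simpa [Matrix.mulVec, dotProduct, Fin.sum_univ_three] using (h1 x).hasDerivAt
      · simpa [Matrix.mulVec, dotProduct, Fin.sum_univ_three] using (h2 x).hasDerivAt
      · simpa [Matrix.mulVec, dotProduct, Fin.sum_univ_three] using h3 x) hτ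
  have e0 := hper 0
  have e1 := hper1 0
  have e2 := hper2 0
  rw [zero_add] at e0 e1 e2
  simpa only [e0, e1, e2] using key

/-- Directional derivatives commute at a point where the function is `C²`. -/
lemma fderiv_fderiv_apply_comm {Q : Type*} [NormedAddCommGroup Q] [NormedSpace ℝ Q]
    {G : Q → ℝ} {q : Q} (hG : ContDiffAt ℝ 2 G q) (e e' : Q) :
    fderiv ℝ (fun p => fderiv ℝ G p e) q e' = fderiv ℝ (fun p => fderiv ℝ G p e') q e := by
  have hd : DifferentiableAt ℝ (fderiv ℝ G) q :=
    (hG.fderiv_right (m := 1) (by norm_num)).differentiableAt (by norm_num)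
  have hs : IsSymmSndFDerivAt ℝ G q := hG.isSymmSndFDerivAt (by simp)
  rw [fderiv_clm_apply hd (differentiableAt_const e),
    fderiv_clm_apply hd (differentiableAt_const e')]
  simpa using hs.eq e' e

lemma hasDerivAt_slice_s8 {P : Type*} [NormedAddCommGroup P] [NormedSpace ℝ P]
    {G : ℝ × P → ℝ} {x : ℝ} {p : P} (hG : DifferentiableAt ℝ G (x, p)) :
    HasDerivAt (fun y => G (y, p)) (fderiv ℝ G (x, p) (1, 0)) x :=
  hG.hasFDerivAt.comp_hasDerivAt x ((hasDerivAt_id x).prodMk (hasDerivAt_const x p))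

lemma contDiffOn_fderiv_apply {Q : Type*} [NormedAddCommGroup Q] [NormedSpace ℝ Q]
    {G : Q → ℝ} {S : Set Q} (hS : IsOpen S) {m n : ℕ} (hG : ContDiffOn ℝ n G S)
    (hmn : m + 1 ≤ n) (e : Q) : ContDiffOn ℝ m (fun q => fderiv ℝ G q e) S :=
  (hG.fderiv_of_isOpen hS (by exact_mod_cast hmn)).clm_apply contDiffOn_const

/-- Linearization of the profile equation: the derivative `v` of the family `U` in a direction `e`
without `c`-component satisfies `v''' = -f''(u) u_x v + (c - f'(u)) v'`. -/
lemma directional_derivative_ode {f : ℝ → ℝ} (hf : ContDiff ℝ 3 f)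
    {Ω : Set (ℝ × ℝ × ℝ)} (hΩ : IsOpen Ω) {U : ℝ × ℝ × ℝ × ℝ → ℝ}
    (hU : ContDiffOn ℝ 3 U (Set.univ ×ˢ Ω))
    (hprofile : ∀ p ∈ Ω, ∀ x : ℝ,
      deriv (deriv (fun y => U (y, p))) x + f (U (x, p)) - p.2.2 * U (x, p) = p.1)
    {p : ℝ × ℝ × ℝ} (hp : p ∈ Ω) {e : ℝ × ℝ × ℝ × ℝ} (he : e.2.2.2 = 0)
    {v : ℝ → ℝ} (hv : ∀ x, v x = fderiv ℝ U (x, p) e) :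
    Differentiable ℝ v ∧ Differentiable ℝ (deriv v) ∧
    ∀ x, HasDerivAt (deriv (deriv v))
      (-(deriv (deriv f) (U (x, p))) * deriv (fun y => U (y, p)) x * v x
        + (p.2.2 - deriv f (U (x, p))) * deriv v x) x := by
  obtain rfl : v = fun x => fderiv ℝ U (x, p) e := funext hv
  set S : Set (ℝ × ℝ × ℝ × ℝ) := Set.univ ×ˢ Ω with hSdef
  have hS : IsOpen S := isOpen_univ.prod hΩ
  have mem : ∀ {r : ℝ × ℝ × ℝ}, r ∈ Ω → ∀ x : ℝ, (x, r) ∈ S := fun hr x => ⟨trivial, hr⟩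
  have hUd : ∀ q ∈ S, DifferentiableAt ℝ U q := fun q hq =>
    (hU.contDiffAt (hS.mem_nhds hq)).differentiableAt (by norm_num)
  -- `A = ∂_x U`, `B = ∂_x² U`, `D = ∂_e U`, `D1 = ∂_x ∂_e U`.
  let A : ℝ × ℝ × ℝ × ℝ → ℝ := fun q => fderiv ℝ U q (1, 0)
  let B : ℝ × ℝ × ℝ × ℝ → ℝ := fun q => fderiv ℝ A q (1, 0)
  let D : ℝ × ℝ × ℝ × ℝ → ℝ := fun q => fderiv ℝ U q e
  let D1 : ℝ × ℝ × ℝ × ℝ → ℝ := fun q => fderiv ℝ D q (1, 0)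
  have hA : ContDiffOn ℝ 2 A S := contDiffOn_fderiv_apply (m := 2) (n := 3) hS hU (by norm_num) _
  have hD : ContDiffOn ℝ 2 D S := contDiffOn_fderiv_apply (m := 2) (n := 3) hS hU (by norm_num) _
  have hD1 : ContDiffOn ℝ 1 D1 S :=
    contDiffOn_fderiv_apply (m := 1) (n := 2) hS hD (by norm_num) _
  have hAd : ∀ q ∈ S, DifferentiableAt ℝ A q := fun q hq =>
    (hA.contDiffAt (hS.mem_nhds hq)).differentiableAt (by norm_num)
  have hDd : ∀ q ∈ S, DifferentiableAt ℝ D q := fun q hq =>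
    (hD.contDiffAt (hS.mem_nhds hq)).differentiableAt (by norm_num)
  have hD1d : ∀ q ∈ S, DifferentiableAt ℝ D1 q := fun q hq =>
    (hD1.contDiffAt (hS.mem_nhds hq)).differentiableAt (by norm_num)
  have dU : ∀ {r : ℝ × ℝ × ℝ}, r ∈ Ω → deriv (fun y => U (y, r)) = fun y => A (y, r) :=
    fun hr => funext fun y => (hasDerivAt_slice_s8 (hUd _ (mem hr y))).deriv
  have ddU : ∀ {r : ℝ × ℝ × ℝ}, r ∈ Ω →
      deriv (deriv (fun y => U (y, r))) = fun y => B (y, r) := fun hr => by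
    rw [dU hr]; exact funext fun y => (hasDerivAt_slice_s8 (hAd _ (mem hr y))).deriv
  have dv : deriv (fun x => D (x, p)) = fun x => D1 (x, p) :=
    funext fun y => (hasDerivAt_slice_s8 (hDd _ (mem hp y))).deriv
  have ddv : deriv (deriv (fun x => D (x, p))) = fun x => fderiv ℝ D1 (x, p) (1, 0) := by
    rw [dv]; exact funext fun y => (hasDerivAt_slice_s8 (hD1d _ (mem hp y))).deriv
  -- `∂_x² ∂_e U = ∂_e ∂_x² U`, by exchanging derivatives twice.
  have hcomm : ∀ q ∈ S, fderiv ℝ D1 q (1, 0) = fderiv ℝ B q e := by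
    intro q hq
    have h1 : D1 =ᶠ[nhds q] fun q => fderiv ℝ A q e := by
      filter_upwards [hS.mem_nhds hq] with r hr
      exact fderiv_fderiv_apply_comm
        ((hU.contDiffAt (hS.mem_nhds hr)).of_le (by norm_num)) e (1, 0)
    rw [h1.fderiv_eq]
    exact fderiv_fderiv_apply_comm (hA.contDiffAt (hS.mem_nhds hq)) e (1, 0)
  have hf1 : Differentiable ℝ f := hf.differentiable (by norm_num)
  have hf2 : Differentiable ℝ (deriv f) :=
    ((contDiff_succ_iff_deriv (n := 2)).1 (by exact_mod_cast hf)).2.2.differentiable (by norm_num)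
  have hBe : ∀ q ∈ S, fderiv ℝ B q e = e.2.1 + q.2.2.2 * D q - deriv f (U q) * D q := by
    intro q hq
    have h1 : B =ᶠ[nhds q] fun q => q.2.1 + q.2.2.2 * U q - f (U q) := by
      filter_upwards [hS.mem_nhds hq] with r hr
      have := hprofile r.2 hr.2 r.1
      rw [ddU hr.2] at this
      simp only [Prod.mk.eta] at this
      linarith
    have hUq := (hUd q hq).hasFDerivAt
    have ha : HasFDerivAt (fun q : ℝ × ℝ × ℝ × ℝ => q.2.1)
        ((ContinuousLinearMap.fst ℝ ℝ (ℝ × ℝ)).comp (ContinuousLinearMap.snd ℝ ℝ (ℝ × ℝ × ℝ))) q :=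
      ((ContinuousLinearMap.fst ℝ ℝ (ℝ × ℝ)).comp
        (ContinuousLinearMap.snd ℝ ℝ (ℝ × ℝ × ℝ))).hasFDerivAt
    have hc : HasFDerivAt (fun q : ℝ × ℝ × ℝ × ℝ => q.2.2.2)
        ((ContinuousLinearMap.snd ℝ ℝ ℝ).comp ((ContinuousLinearMap.snd ℝ ℝ (ℝ × ℝ)).comp
          (ContinuousLinearMap.snd ℝ ℝ (ℝ × ℝ × ℝ)))) q :=
      ((ContinuousLinearMap.snd ℝ ℝ ℝ).comp ((ContinuousLinearMap.snd ℝ ℝ (ℝ × ℝ)).comp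
        (ContinuousLinearMap.snd ℝ ℝ (ℝ × ℝ × ℝ)))).hasFDerivAt
    have h2 := (ha.add (hc.mul hUq)).sub ((hf1 (U q)).hasDerivAt.comp_hasFDerivAt q hUq)
    rw [h1.fderiv_eq]
    refine (congrArg (· e) h2.fderiv).trans ?_
    simp [he, D]
  refine ⟨fun x => (hasDerivAt_slice_s8 (hDd _ (mem hp x))).differentiableAt, ?_, fun x => ?_⟩
  · change Differentiable ℝ (deriv (fun x => D (x, p)))
    rw [dv]
    exact fun x => (hasDerivAt_slice_s8 (hD1d _ (mem hp x))).differentiableAt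
  · change HasDerivAt (deriv (deriv (fun x => D (x, p)))) (_ * _ * D (x, p)
      + _ * deriv (fun x => D (x, p)) x) x
    have h3 : deriv (deriv (fun x => D (x, p))) = fun x =>
        e.2.1 + p.2.2 * D (x, p) - deriv f (U (x, p)) * D (x, p) := by
      rw [ddv]
      exact funext fun y => (hcomm _ (mem hp y)).trans (hBe _ (mem hp y))
    rw [h3, dU hp, dv]
    have hDx : HasDerivAt (fun y => D (y, p)) (D1 (x, p)) x := hasDerivAt_slice_s8 (hDd _ (mem hp x))
    have hUx : HasDerivAt (fun y => U (y, p)) (A (x, p)) x := hasDerivAt_slice_s8 (hUd _ (mem hp x))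
    have hfx : HasDerivAt (fun y => deriv f (U (y, p)))
        (deriv (deriv f) (U (x, p)) * A (x, p)) x :=
      HasDerivAt.comp (h₂ := deriv f) x (hf2 (U (x, p))).hasDerivAt hUx
    exact (((hDx.const_mul p.2.2).const_add e.2.1).sub (hfx.mul hDx)).congr_deriv (by ring)

/-- If the direction `d` is tangent to the level set of the period `T`, the derivative of the family
in the direction `d` is periodic with the same period. -/
lemma tangential_derivative_periodic {P : Type*} [NormedAddCommGroup P] [NormedSpace ℝ P]
    {Ω : Set P} (hΩ : IsOpen Ω) {U : ℝ × P → ℝ} {T : P → ℝ} {p : P} (hp : p ∈ Ω)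
    (hU : ∀ x, DifferentiableAt ℝ U (x, p)) (hT : DifferentiableAt ℝ T p)
    (hper : ∀ r ∈ Ω, ∀ x, U (x + T r, r) = U (x, r)) {d : P} (hd : fderiv ℝ T p d = 0) (x : ℝ) :
    fderiv ℝ U (x + T p, p) (0, d) = fderiv ℝ U (x, p) (0, d) := by
  have h1 : HasFDerivAt (fun r => U (x + T r, r))
      ((fderiv ℝ U (x + T p, p)).comp ((fderiv ℝ T p).prod (ContinuousLinearMap.id ℝ P))) p :=
    (hU (x + T p)).hasFDerivAt.comp (f := fun r => (x + T r, r)) p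
      ((hT.hasFDerivAt.const_add x).prodMk (hasFDerivAt_id p))
  have h2 : HasFDerivAt (fun r => U (x, r))
      ((fderiv ℝ U (x, p)).comp
        ((0 : P →L[ℝ] ℝ).prod (ContinuousLinearMap.id ℝ P))) p :=
    (hU x).hasFDerivAt.comp (f := fun r => (x, r)) p
      ((hasFDerivAt_const x p).prodMk (hasFDerivAt_id p))
  have h3 : (fun r => U (x + T r, r)) =ᶠ[nhds p] fun r => U (x, r) := by
    filter_upwards [hΩ.mem_nhds hp] with r hr using hper r hr x
  have h4 := congrArg (· d) ((h1.congr_of_eventuallyEq h3.symm).unique h2)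
  simpa [hd] using h4


/-- For the first-order system of the gKdV spectral problem at `μ = 0`,
the monodromy matrix `M₀ = Y(T)` fixes the initial-data vectors of the periodic
solutions `u_x` and `w = T_E·u_a − T_a·u_E`; in particular `det(M₀ − I) = 0`. -/
theorem gkdv_monodromy_fixes_periodic_solutions
    (f F : ℝ → ℝ) (hf : ContDiff ℝ 3 f)
    (hF : ∀ s, HasDerivAt F (f s) s) (hF0 : F 0 = 0)
    (V : ℝ → ℝ → ℝ → ℝ) (hV : ∀ s a c, V s a c = F s - c/2 * s^2 - a * s)
    (Ω : Set (ℝ × ℝ × ℝ)) (hΩ : IsOpen Ω)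
    (um up : ℝ × ℝ × ℝ → ℝ)
    (hum : ContDiffOn ℝ 1 um Ω) (hup : ContDiffOn ℝ 1 up Ω)
    (horder : ∀ p ∈ Ω, um p < up p)
    (hVm : ∀ a E c : ℝ, (a, E, c) ∈ Ω → V (um (a, E, c)) a c = E)
    (hVp : ∀ a E c : ℝ, (a, E, c) ∈ Ω → V (up (a, E, c)) a c = E)
    (hVm' : ∀ a E c : ℝ, (a, E, c) ∈ Ω → deriv (fun s => V s a c) (um (a, E, c)) < 0)
    (hVp' : ∀ a E c : ℝ, (a, E, c) ∈ Ω → 0 < deriv (fun s => V s a c) (up (a, E, c)))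
    (hbelow : ∀ a E c : ℝ, (a, E, c) ∈ Ω →
      ∀ s ∈ Set.Ioo (um (a, E, c)) (up (a, E, c)), V s a c < E)
    (T : ℝ × ℝ × ℝ → ℝ) (hT : ContDiffOn ℝ 1 T Ω) (hTpos : ∀ p ∈ Ω, 0 < T p)
    (u : ℝ → ℝ → ℝ → ℝ → ℝ)
    (hu : ContDiffOn ℝ 3 (fun q : ℝ × ℝ × ℝ × ℝ => u q.1 q.2.1 q.2.2.1 q.2.2.2)
      ((Set.univ : Set ℝ) ×ˢ Ω))
    (hprofile : ∀ a E c : ℝ, (a, E, c) ∈ Ω → ∀ x : ℝ,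
      deriv (deriv (fun y => u y a E c)) x + f (u x a E c) - c * u x a E c = a)
    (henergy : ∀ a E c : ℝ, (a, E, c) ∈ Ω → ∀ x : ℝ,
      1/2 * (deriv (fun y => u y a E c) x)^2 + F (u x a E c)
        - c/2 * (u x a E c)^2 - a * u x a E c = E)
    (hperiodic : ∀ a E c : ℝ, (a, E, c) ∈ Ω → ∀ x : ℝ,
      u (x + T (a, E, c)) a E c = u x a E c)
    (hinit : ∀ a E c : ℝ, (a, E, c) ∈ Ω → u 0 a E c = um (a, E, c))
    (hinit' : ∀ a E c : ℝ, (a, E, c) ∈ Ω → deriv (fun y => u y a E c) 0 = 0)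
    (a E c : ℝ) (hmem : (a, E, c) ∈ Ω)
    (Hm : ℝ → Matrix (Fin 3) (Fin 3) ℝ)
    (hHm : ∀ x : ℝ, Hm x =
      !![0, 1, 0;
         0, 0, 1;
         -(deriv (deriv f) (u x a E c)) * deriv (fun y => u y a E c) x,
           c - deriv f (u x a E c), 0])
    (Y : ℝ → Matrix (Fin 3) (Fin 3) ℝ)
    (hY0 : Y 0 = 1)
    (hYode : ∀ (x : ℝ) (i j : Fin 3),
      HasDerivAt (fun y => Y y i j) ((Hm x * Y x) i j) x) :
    (Y (T (a, E, c))).mulVec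
        ![deriv (fun y => u y a E c) 0,
          deriv (deriv (fun y => u y a E c)) 0,
          deriv (deriv (deriv (fun y => u y a E c))) 0]
      = ![deriv (fun y => u y a E c) 0,
          deriv (deriv (fun y => u y a E c)) 0,
          deriv (deriv (deriv (fun y => u y a E c))) 0] ∧
    (Y (T (a, E, c))).mulVec
        ![(fun y => deriv (fun E' => T (a, E', c)) E * deriv (fun a' => u y a' E c) a
            - deriv (fun a' => T (a', E, c)) a * deriv (fun E' => u y a E' c) E) 0,
          deriv (fun y => deriv (fun E' => T (a, E', c)) E * deriv (fun a' => u y a' E c) a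
            - deriv (fun a' => T (a', E, c)) a * deriv (fun E' => u y a E' c) E) 0,
          deriv (deriv (fun y =>
            deriv (fun E' => T (a, E', c)) E * deriv (fun a' => u y a' E c) a
            - deriv (fun a' => T (a', E, c)) a * deriv (fun E' => u y a E' c) E)) 0]
      = ![(fun y => deriv (fun E' => T (a, E', c)) E * deriv (fun a' => u y a' E c) a
            - deriv (fun a' => T (a', E, c)) a * deriv (fun E' => u y a E' c) E) 0,
          deriv (fun y => deriv (fun E' => T (a, E', c)) E * deriv (fun a' => u y a' E c) a
            - deriv (fun a' => T (a', E, c)) a * deriv (fun E' => u y a E' c) E) 0,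
          deriv (deriv (fun y =>
            deriv (fun E' => T (a, E', c)) E * deriv (fun a' => u y a' E c) a
            - deriv (fun a' => T (a', E, c)) a * deriv (fun E' => u y a E' c) E)) 0] ∧
    Matrix.det (Y (T (a, E, c)) - 1) = 0 := by
  let U : ℝ × ℝ × ℝ × ℝ → ℝ := fun q => u q.1 q.2.1 q.2.2.1 q.2.2.2
  have hS : IsOpen ((Set.univ : Set ℝ) ×ˢ Ω) := isOpen_univ.prod hΩ
  have hUd : ∀ x, DifferentiableAt ℝ U (x, a, E, c) := fun x =>
    (hu.contDiffAt (hS.mem_nhds ⟨trivial, hmem⟩)).differentiableAt (by norm_num)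
  have hTd : DifferentiableAt ℝ T (a, E, c) :=
    (hT.contDiffAt (hΩ.mem_nhds hmem)).differentiableAt (by norm_num)
  have hprofile' : ∀ p ∈ Ω, ∀ x : ℝ,
      deriv (deriv (fun y => U (y, p))) x + f (U (x, p)) - p.2.2 * U (x, p) = p.1 :=
    fun p hp x => hprofile p.1 p.2.1 p.2.2 hp x
  have hux : ∀ x, HasDerivAt (fun y => u y a E c) (fderiv ℝ U (x, a, E, c) (1, 0)) x :=
    fun x => hasDerivAt_slice_s8 (hUd x)
  -- The coordinate lines through `(a, E, c)` in the directions `a` and `E`.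
  have hla : HasDerivAt (fun a' : ℝ => (a', E, c)) ((1, 0, 0) : ℝ × ℝ × ℝ) a :=
    (hasDerivAt_id a).prodMk (hasDerivAt_const a (E, c))
  have hlE : HasDerivAt (fun E' : ℝ => (a, E', c)) ((0, 1, 0) : ℝ × ℝ × ℝ) E :=
    (hasDerivAt_const E a).prodMk ((hasDerivAt_id E).prodMk (hasDerivAt_const E c))
  have hua : ∀ x, deriv (fun a' => u x a' E c) a = fderiv ℝ U (x, a, E, c) (0, 1, 0, 0) :=
    fun x => (HasFDerivAt.comp_hasDerivAt (l := U) a (hUd x).hasFDerivAt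
      ((hasDerivAt_const a x).prodMk hla)).deriv
  have huE : ∀ x, deriv (fun E' => u x a E' c) E = fderiv ℝ U (x, a, E, c) (0, 0, 1, 0) :=
    fun x => (HasFDerivAt.comp_hasDerivAt (l := U) E (hUd x).hasFDerivAt
      ((hasDerivAt_const E x).prodMk hlE)).deriv
  have hTa : deriv (fun a' => T (a', E, c)) a = fderiv ℝ T (a, E, c) (1, 0, 0) :=
    (hTd.hasFDerivAt.comp_hasDerivAt a hla).deriv
  have hTE : deriv (fun E' => T (a, E', c)) E = fderiv ℝ T (a, E, c) (0, 1, 0) :=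
    (hTd.hasFDerivAt.comp_hasDerivAt E hlE).deriv
  have hucont : Continuous fun x => u x a E c :=
    continuous_iff_continuousAt.2 fun x => (hux x).continuousAt
  have hf1 : ContDiff ℝ 2 (deriv f) :=
    ((contDiff_succ_iff_deriv (n := 2)).1 (by exact_mod_cast hf)).2.2
  have hf2 : ContDiff ℝ 1 (deriv (deriv f)) :=
    ((contDiff_succ_iff_deriv (n := 1)).1 (by exact_mod_cast hf1)).2.2
  have huxd : Differentiable ℝ (deriv fun y => u y a E c) :=
    (directional_derivative_ode hf hΩ hu hprofile' hmem (e := (1, 0)) rfl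
      (fun x => (hux x).deriv)).1
  have hg : Continuous fun x =>
      -(deriv (deriv f) (u x a E c)) * deriv (fun y => u y a E c) x :=
    (hf2.continuous.comp hucont).neg.mul huxd.continuous
  have hh : Continuous fun x => c - deriv f (u x a E c) :=
    continuous_const.sub (hf1.continuous.comp hucont)
  have hTnn : 0 ≤ T (a, E, c) := (hTpos _ hmem).le
  have hξ : (Y (T (a, E, c))).mulVec
        ![deriv (fun y => u y a E c) 0,
          deriv (deriv (fun y => u y a E c)) 0,
          deriv (deriv (deriv (fun y => u y a E c))) 0]
      = ![deriv (fun y => u y a E c) 0,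
          deriv (deriv (fun y => u y a E c)) 0,
          deriv (deriv (deriv (fun y => u y a E c))) 0] := by
    obtain ⟨h1, h2, h3⟩ := directional_derivative_ode hf hΩ hu hprofile' hmem (e := (1, 0)) rfl
      (fun x => (hux x).deriv)
    refine monodromy_mulVec_periodic hg hh hHm hY0 hYode h1 h2 h3 hTnn fun x => ?_
    rw [← deriv_comp_add_const]
    exact congrArg (deriv · x) (funext (hperiodic a E c hmem))
  refine ⟨hξ, ?_, ?_⟩
  -- The direction of differentiation defining `w`.
  · let d : ℝ × ℝ × ℝ :=
      (deriv (fun E' => T (a, E', c)) E, -deriv (fun a' => T (a', E, c)) a, 0)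
    have hd : d = deriv (fun E' => T (a, E', c)) E • ((1, 0, 0) : ℝ × ℝ × ℝ)
        - deriv (fun a' => T (a', E, c)) a • ((0, 1, 0) : ℝ × ℝ × ℝ) := by
      simp [d]
    have hd' : ((0, d) : ℝ × ℝ × ℝ × ℝ)
        = deriv (fun E' => T (a, E', c)) E • ((0, 1, 0, 0) : ℝ × ℝ × ℝ × ℝ)
        - deriv (fun a' => T (a', E, c)) a • ((0, 0, 1, 0) : ℝ × ℝ × ℝ × ℝ) := by
      simp [d]
    have hdT : fderiv ℝ T (a, E, c) d = 0 := by
      rw [hd, map_sub, map_smul, map_smul, ← hTa, ← hTE, smul_eq_mul, smul_eq_mul]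
      ring
    have hw : ∀ x, deriv (fun E' => T (a, E', c)) E * deriv (fun a' => u x a' E c) a
        - deriv (fun a' => T (a', E, c)) a * deriv (fun E' => u x a E' c) E
        = fderiv ℝ U (x, a, E, c) (0, d) := fun x => by
      rw [hd', map_sub, map_smul, map_smul, ← hua, ← huE, smul_eq_mul, smul_eq_mul]
    obtain ⟨h1, h2, h3⟩ := directional_derivative_ode hf hΩ hu hprofile' hmem (e := (0, d)) rfl hw
    refine monodromy_mulVec_periodic hg hh hHm hY0 hYode h1 h2 h3 hTnn fun x => ?_
    rw [hw, hw]
    exact tangential_derivative_periodic hΩ hmem hUd hTd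
      (fun r hr y => hperiodic r.1 r.2.1 r.2.2 hr y) hdT x
  -- `u_xx(0) = -V'(u_-) ≠ 0`, so the first fixed vector is nonzero.
  · have hV' : deriv (fun s => V s a c) (um (a, E, c))
        = f (um (a, E, c)) - c * um (a, E, c) - a := by
      have h := ((hF (um (a, E, c))).sub
        (((hasDerivAt_id (um (a, E, c))).pow 2).const_mul (c / 2))).sub
        ((hasDerivAt_id (um (a, E, c))).const_mul a)
      rw [funext fun s => hV s a c]
      refine h.deriv.trans ?_
      simp
      ring
    have hneg := hVm' a E c hmem
    have hp0 := hprofile a E c hmem 0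
    rw [hinit a E c hmem] at hp0
    rw [hV'] at hneg
    refine Matrix.exists_mulVec_eq_zero_iff.1 ⟨![deriv (fun y => u y a E c) 0,
      deriv (deriv (fun y => u y a E c)) 0,
      deriv (deriv (deriv (fun y => u y a E c))) 0], fun h0 => ?_, ?_⟩
    · have h1 : deriv (deriv (fun y => u y a E c)) 0 = 0 := congrFun h0 1
      linarith
    · rw [Matrix.sub_mulVec, Matrix.one_mulVec, hξ, sub_self]
end

section
/- Let f : ℝ → ℝ be C³ with antiderivative F (F' = f, F(0) = 0), V(s; a, c) = F(s) − (c/2)s² − a·s, and let u(x; a, E, c) be a periodic traveling wave family of the gKdV equation: Ω ⊆ ℝ³ open; u_− < u_+ C¹ on Ω with V(u_±; a, c) = E, ∂V/∂s(u_−; a, c) < 0, ∂V/∂s(u_+; a, c) > 0, V(·; a, c) < E on (u_−, u_+); T(a,E,c) > 0 C¹; u jointly C³ with u_xx + f(u) − c·u = a, (1/2)u_x² + F(u) − (c/2)u² − a·u = E, u(x + T) = u(x), u(0) = u_−, u_x(0) = 0; M = ∫₀^T u dx, P = ∫₀^T u² dx. For (μ, k) ∈ ℂ × ℝ let Y(x;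 μ, k) solve Y_x = H(x; μ, k)·Y, Y(0) = I, where H has rows (0, 1, 0), (0, 0, 1), (−μ − f''(u(x))·u_x(x), c + k² − f'(u(x)), 0), and let D(μ, k) = det(Y(T; μ, k) − I). Let {T,M,P}_{a,E,c} denote the determinant of the 3×3 Jacobian of (T, M, P) with respect to (a, E, c) and {T,M}_{a,E} the determinant of the 2×2 Jacobian of (T, M) with respect to (a, E). Then, as (μ, k) → (0, 0) in ℂ × ℝ, D(μ, k) = −(μ³/2)·{T,M,P}_{a,E,c} + μ·k²·{T,M}_{a,E}·∫₀^T u_x² dx + O(|μ|⁴ + k⁴). -/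
open MeasureTheory intervalIntegral Asymptotics

/-!
Write `L = -∂ₓ² + q` with `q = c - f'(u)`, so that the spectral problem reads
`∂ₓ(L + k²)v = μv`. Differentiating the profile equation in its parameters gives the exact relations
`L u_x = 0`, `∂ₓ L u_a = ∂ₓ L u_E = 0` and `∂ₓ L (-u_c) = u_x`. Take the solutions of the spectral
problem whose initial data at `x = 0` are those of `u_x - μ u_c`, `u_a` and `u_E`; let `A(μ)` be the
matrix of these data, and let `R` be the matrix of the row functionals `v'`, `L v`,
`u L v - u_xx v` at `x = 0`. The energy relation and the profile equation at `x = 0` give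
`det A = -1` and `det R = u_xx(0) ≠ 0`, so `det (R (Y(T) - I) A) = -u_xx(0) D(μ, k)`, and the entries
of `R (Y(T) - I) A` are the jumps over a period of the three functionals along the three solutions.

The jumps of the last two functionals are exactly `∫ (μv - k²v')` and `∫ u (μv - k²v')`
(`jump_L`, `jump_uL`). Grönwall's inequality (`gronwall_uniform`) compares each solution with
`u_x - μ u_c`, `u_a` or `u_E`, with error `O(ε²)`, `O(ε)`, `O(ε)`, where `ε = max(‖μ‖, |k|)`. Thus
every entry is known to relative order `ε` (`column_translation`, `column_kernel`): the jumps of the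
derivatives are multiples of `T_a`, `T_E`, `T_c` by differentiating the periodicity relation
(`exists_variation`), and the integrals are `M_a - u(0) T_a`, `(P_a - u(0)² T_a)/2` and so on. The
first column and the last two rows each carry a factor of order `ε`, so the determinant is of order
`ε³` with error `O(ε⁴)` (`det_close`); evaluating the leading determinant gives the claim
(`evans_core`).
-/

/-! ### Calculus in two variables -/

lemma hasDerivAt_slice_fst {G : ℝ × ℝ → ℝ} {x s : ℝ} (h : DifferentiableAt ℝ G (x, s)) :
    HasDerivAt (fun y => G (y, s)) (fderiv ℝ G (x, s) (1, 0)) x := by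
  have h1 : HasDerivAt (fun y : ℝ => (y, s)) ((1 : ℝ), (0 : ℝ)) x :=
    (hasDerivAt_id x).prodMk (hasDerivAt_const x s)
  exact h.hasFDerivAt.comp_hasDerivAt x h1

lemma hasDerivAt_slice_snd {G : ℝ × ℝ → ℝ} {x s : ℝ} (h : DifferentiableAt ℝ G (x, s)) :
    HasDerivAt (fun r => G (x, r)) (fderiv ℝ G (x, s) (0, 1)) s := by
  have h1 : HasDerivAt (fun r : ℝ => (x, r)) ((0 : ℝ), (1 : ℝ)) s :=
    (hasDerivAt_const s x).prodMk (hasDerivAt_id s)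
  exact h.hasFDerivAt.comp_hasDerivAt s h1

lemma contDiffAt_fderiv_apply {G : ℝ × ℝ → ℝ} {p : ℝ × ℝ} {m n : ℕ∞} (w : ℝ × ℝ)
    (h : ContDiffAt ℝ n G p) (hmn : m + 1 ≤ n) :
    ContDiffAt ℝ m (fun q => fderiv ℝ G q w) p := by
  have : ContDiffAt ℝ m (fderiv ℝ G) p := h.fderiv_right (by exact_mod_cast hmn)
  exact this.clm_apply contDiffAt_const

/-- Symmetry of second derivatives, in the form `∂ₓ∂ₛG = ∂ₛ∂ₓG`. -/
lemma hasDerivAt_mixed {G : ℝ × ℝ → ℝ} {x s : ℝ} (h : ContDiffAt ℝ 2 G (x, s)) :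
    HasDerivAt (fun y => fderiv ℝ G (y, s) (0, 1))
      (fderiv ℝ (fun q => fderiv ℝ G q (1, 0)) (x, s) (0, 1)) x := by
  have h1 : ContDiffAt ℝ 1 (fderiv ℝ G) (x, s) := h.fderiv_right (by norm_num)
  have hd : DifferentiableAt ℝ (fderiv ℝ G) (x, s) := h1.differentiableAt (by norm_num)
  have e : ∀ w, fderiv ℝ (fun q => fderiv ℝ G q w) (x, s)
      = (fderiv ℝ (fderiv ℝ G) (x, s)).flip w := by
    intro w
    have := (hd.hasFDerivAt.clm_apply (hasFDerivAt_const w (x, s))).fderiv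
    rw [this]; ext <;> simp
  have hs := h.isSymmSndFDerivAt (by simp)
  have hw := hasDerivAt_slice_fst (G := fun q => fderiv ℝ G q (0, 1)) (x := x) (s := s)
    (hd.clm_apply (differentiableAt_const _))
  rw [e] at hw ⊢
  simp only [ContinuousLinearMap.flip_apply] at hw ⊢
  rwa [hs.eq] at hw

/-- Leibniz rule with moving upper limit: `(∫₀^τ g)' = τ' g(τ, ·) + ∫₀^τ ∂ₛg`. -/
lemma hasDerivAt_integral_moving {g : ℝ × ℝ → ℝ} {S : Set ℝ} (hS : IsOpen S) {s₀ : ℝ}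
    (hs₀ : s₀ ∈ S) (hg : ∀ x, ∀ s ∈ S, ContDiffAt ℝ 1 g (x, s)) {τ : ℝ → ℝ} {τ' : ℝ}
    (hτ : HasDerivAt τ τ' s₀) :
    HasDerivAt (fun s => ∫ x in (0:ℝ)..(τ s), g (x, s))
      (τ' * g (τ s₀, s₀) + ∫ x in (0:ℝ)..(τ s₀), fderiv ℝ g (x, s₀) (0, 1)) s₀ := by
  obtain ⟨ρ, hρ, hball⟩ := Metric.isOpen_iff.1 hS s₀ hs₀
  have hcont : ∀ s ∈ S, Continuous (fun x => g (x, s)) := fun s hs =>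
    continuous_iff_continuousAt.2 fun x =>
      (hg x s hs).continuousAt.comp (f := fun x : ℝ => (x, s)) (by fun_prop)
  have hD : ∀ x, ∀ s ∈ S, ContinuousAt (fun q => fderiv ℝ g q (0, 1)) (x, s) := fun x s hs =>
    (contDiffAt_fderiv_apply (m := 0) (n := 1) (0, 1) (hg x s hs) (by norm_num)).continuousAt
  have hDc : Continuous (fun x => fderiv ℝ g (x, s₀) (0, 1)) :=
    continuous_iff_continuousAt.2 fun x =>
      (hD x s₀ hs₀).comp (f := fun x : ℝ => (x, s₀)) (by fun_prop)
  have hsub : Metric.closedBall s₀ (ρ / 2) ⊆ S :=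
    (Metric.closedBall_subset_ball (by linarith)).trans hball
  obtain ⟨B, hB⟩ := (isCompact_uIcc (a := (0:ℝ)) (b := τ s₀)).prod
    (isCompact_closedBall s₀ (ρ / 2)) |>.exists_bound_of_continuousOn
    (f := fun q => fderiv ℝ g q (0, 1))
    (fun q hq => (hD q.1 q.2 (hsub hq.2)).continuousWithinAt)
  have h1 : HasDerivAt (fun s => ∫ x in (0:ℝ)..(τ s₀), g (x, s))
      (∫ x in (0:ℝ)..(τ s₀), fderiv ℝ g (x, s₀) (0, 1)) s₀ := by
    refine (intervalIntegral.hasDerivAt_integral_of_dominated_loc_of_deriv_le (μ := volume)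
      (F := fun s x => g (x, s))
      (F' := fun s x => fderiv ℝ g (x, s) (0, 1)) (bound := fun _ => B)
      (Metric.closedBall_mem_nhds s₀ (half_pos hρ)) ?_ ?_ ?_ ?_ ?_ ?_).2
    · filter_upwards [hS.mem_nhds hs₀] with s hs
      exact (hcont s hs).aestronglyMeasurable
    · exact (hcont s₀ hs₀).intervalIntegrable _ _
    · exact hDc.aestronglyMeasurable
    · refine Filter.Eventually.of_forall fun x hx s hs => ?_
      exact hB (x, s) ⟨Set.uIoc_subset_uIcc hx, hs⟩
    · exact intervalIntegrable_const
    · refine Filter.Eventually.of_forall fun x hx s hs => ?_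
      exact hasDerivAt_slice_snd ((hg x s (hsub hs)).differentiableAt (by norm_num))
  have h2 : HasDerivAt (fun s => ∫ x in (τ s₀)..(τ s), g (x, s)) (τ' * g (τ s₀, s₀)) s₀ := by
    have h3 : HasDerivAt (fun s => (τ s - τ s₀) * g (τ s₀, s₀)) (τ' * g (τ s₀, s₀)) s₀ :=
      (hτ.sub_const _).mul_const _
    have h4 : HasDerivAt (fun s => (∫ x in (τ s₀)..(τ s), g (x, s))
        - (τ s - τ s₀) * g (τ s₀, s₀)) 0 s₀ := by
      rw [hasDerivAt_iff_isLittleO]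
      simp only [integral_same, sub_self, zero_mul, sub_zero, smul_zero]
      have ho : (fun s => (∫ x in (τ s₀)..(τ s), g (x, s)) - (τ s - τ s₀) * g (τ s₀, s₀))
          =o[nhds s₀] fun s => τ s - τ s₀ := by
        rw [isLittleO_iff]
        intro ε hε
        have hgc := (hg (τ s₀) s₀ hs₀).continuousAt
        obtain ⟨δ, hδ, hd⟩ := Metric.continuousAt_iff.1 hgc ε hε
        filter_upwards [hS.mem_nhds hs₀, Metric.ball_mem_nhds s₀ hδ,
          hτ.continuousAt.eventually (Metric.ball_mem_nhds _ hδ)] with s hs hs1 hs2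
        have e : (∫ x in (τ s₀)..(τ s), g (x, s)) - (τ s - τ s₀) * g (τ s₀, s₀)
            = ∫ x in (τ s₀)..(τ s), (g (x, s) - g (τ s₀, s₀)) := by
          rw [integral_sub ((hcont s hs).intervalIntegrable _ _) intervalIntegrable_const]
          simp
        rw [e, Real.norm_eq_abs (τ s - τ s₀)]
        refine norm_integral_le_of_norm_le_const fun x hx => ?_
        rw [← dist_eq_norm]
        refine (hd ?_).le
        rw [Prod.dist_eq, max_lt_iff]
        refine ⟨?_, hs1⟩
        have := Set.abs_sub_left_of_mem_uIcc (Set.uIoc_subset_uIcc hx)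
        rw [Real.dist_eq]
        exact this.trans_lt (by simpa [Real.dist_eq] using hs2)
      exact ho.trans_isBigO hτ.isBigO_sub
    have h5 := h4.add h3
    rw [zero_add] at h5
    exact h5.congr_of_eventuallyEq (Filter.Eventually.of_forall fun s => by simp)
  have h5 := h2.add h1
  refine h5.congr_of_eventuallyEq ?_
  filter_upwards [hS.mem_nhds hs₀] with s hs
  simp only [Pi.add_apply]
  rw [add_comm, integral_add_adjacent_intervals] <;> exact (hcont s hs).intervalIntegrable _ _

/-! ### Variation of the wave in its parameters -/

/-- Differentiation of a one-parameter family of periodic profiles `U(·, s)`, of parameters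
`(α, η, γ)(s)` and period `τ(s)`, in `s`. The variation `v = ∂ₛU` solves the linearized profile
equation, its value at `0` comes from the energy relation, and differentiating
`U(x + τ(s), s) = U(x, s)` and its `x`-derivative at `x = 0` shows that `v` returns to its initial
value while `v'` jumps by `-τ' U_xx(0)`. Hence a non-constant period is what obstructs periodicity
of `v`. -/
lemma exists_variation {f F : ℝ → ℝ} (hf : ContDiff ℝ 3 f) (hF : ∀ s, HasDerivAt F (f s) s)
    {U : ℝ × ℝ → ℝ} {S : Set ℝ} (hS : IsOpen S) {s₀ : ℝ} (hs₀ : s₀ ∈ S)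
    (hU : ∀ x, ∀ s ∈ S, ContDiffAt ℝ 3 U (x, s))
    {α γ η τ : ℝ → ℝ} {α' γ' η' τ' : ℝ}
    (hα : HasDerivAt α α' s₀) (hγ : HasDerivAt γ γ' s₀) (hη : HasDerivAt η η' s₀)
    (hτ : HasDerivAt τ τ' s₀)
    (hprof : ∀ s ∈ S, ∀ x, deriv (deriv (fun y => U (y, s))) x + f (U (x, s))
      - γ s * U (x, s) = α s)
    (hen : ∀ s ∈ S, F (U (0, s)) - γ s / 2 * U (0, s) ^ 2 - α s * U (0, s) = η s)
    (hper : ∀ s ∈ S, ∀ x, U (x + τ s, s) = U (x, s))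
    (hinit : ∀ s ∈ S, deriv (fun y => U (y, s)) 0 = 0) :
    ∃ v v1 v2 : ℝ → ℝ, (∀ x, HasDerivAt v (v1 x) x) ∧ (∀ x, HasDerivAt v1 (v2 x) x) ∧
      (∀ x, v2 x = α' + γ' * U (x, s₀) + (γ s₀ - deriv f (U (x, s₀))) * v x) ∧
      v1 0 = 0 ∧
      (α s₀ + γ s₀ * U (0, s₀) - f (U (0, s₀))) * v 0
        = -(η' + α' * U (0, s₀) + γ' * U (0, s₀) ^ 2 / 2) ∧
      v (τ s₀) = v 0 ∧
      v1 (τ s₀) = -τ' * (α s₀ + γ s₀ * U (0, s₀) - f (U (0, s₀))) ∧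
      HasDerivAt (fun s => ∫ x in (0:ℝ)..(τ s), U (x, s))
        (τ' * U (0, s₀) + ∫ x in (0:ℝ)..(τ s₀), v x) s₀ ∧
      HasDerivAt (fun s => ∫ x in (0:ℝ)..(τ s), U (x, s) ^ 2)
        (τ' * U (0, s₀) ^ 2 + 2 * ∫ x in (0:ℝ)..(τ s₀), U (x, s₀) * v x) s₀ := by
  set U1 : ℝ × ℝ → ℝ := fun q => fderiv ℝ U q (1, 0) with hU1
  set U2 : ℝ × ℝ → ℝ := fun q => fderiv ℝ U1 q (1, 0) with hU2
  have c1 : ∀ x, ∀ s ∈ S, ContDiffAt ℝ 2 U1 (x, s) := fun x s hs =>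
    contDiffAt_fderiv_apply (m := 2) (n := 3) (1, 0) (hU x s hs) (by norm_num)
  have c2 : ∀ x, ∀ s ∈ S, ContDiffAt ℝ 1 U2 (x, s) := fun x s hs =>
    contDiffAt_fderiv_apply (m := 1) (n := 2) (1, 0) (c1 x s hs) (by norm_num)
  have d0 : ∀ x, ∀ s ∈ S, DifferentiableAt ℝ U (x, s) := fun x s hs =>
    (hU x s hs).differentiableAt (by norm_num)
  have d1 : ∀ x, ∀ s ∈ S, DifferentiableAt ℝ U1 (x, s) := fun x s hs =>
    (c1 x s hs).differentiableAt (by norm_num)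
  have d2 : ∀ x, ∀ s ∈ S, DifferentiableAt ℝ U2 (x, s) := fun x s hs =>
    (c2 x s hs).differentiableAt (by norm_num)
  have e1 : ∀ s ∈ S, ∀ x, deriv (fun y => U (y, s)) x = U1 (x, s) := fun s hs x =>
    (hasDerivAt_slice_fst (d0 x s hs)).deriv
  have e2 : ∀ s ∈ S, ∀ x, deriv (deriv (fun y => U (y, s))) x = U2 (x, s) := fun s hs x => by
    rw [funext (e1 s hs)]
    exact (hasDerivAt_slice_fst (d1 x s hs)).deriv
  have hp2 : ∀ x, ∀ s ∈ S, U2 (x, s) = α s + γ s * U (x, s) - f (U (x, s)) := fun x s hs => by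
    have := hprof s hs x
    rw [e2 s hs] at this
    linarith
  have hper1 : ∀ s ∈ S, ∀ x, U1 (x + τ s, s) = U1 (x, s) := fun s hs x => by
    rw [← e1 s hs, ← e1 s hs, ← deriv_comp_add_const]
    congr 1
    exact funext (hper s hs)
  have hi : ∀ s ∈ S, U1 (0, s) = 0 := fun s hs => by rw [← e1 s hs]; exact hinit s hs
  have hfd : ∀ y, HasDerivAt f (deriv f y) y := fun y =>
    (hf.differentiable (by norm_num) y).hasDerivAt
  have hT0 : U (τ s₀, s₀) = U (0, s₀) := by simpa using hper s₀ hs₀ 0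
  have hT1 : U1 (τ s₀, s₀) = 0 := by rw [← hi s₀ hs₀]; simpa using hper1 s₀ hs₀ 0
  have hpath : HasDerivAt (fun s => (τ s, s)) (τ', (1 : ℝ)) s₀ := hτ.prodMk (hasDerivAt_id s₀)
  have split : ∀ L : ℝ × ℝ →L[ℝ] ℝ, L (τ', 1) = τ' * L (1, 0) + L (0, 1) := fun L => by
    have : ((τ', 1) : ℝ × ℝ) = τ' • ((1 : ℝ), (0 : ℝ)) + (0, 1) := by ext <;> simp
    rw [this, map_add, map_smul, smul_eq_mul]
  have hnear : ∀ᶠ s in nhds s₀, s ∈ S := hS.mem_nhds hs₀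
  refine ⟨fun x => fderiv ℝ U (x, s₀) (0, 1), fun x => fderiv ℝ U1 (x, s₀) (0, 1),
    fun x => fderiv ℝ U2 (x, s₀) (0, 1), fun x => ?_, fun x => ?_, fun x => ?_, ?_, ?_, ?_, ?_,
    ?_, ?_⟩
  · exact hasDerivAt_mixed ((hU x s₀ hs₀).of_le (by norm_num))
  · exact hasDerivAt_mixed (c1 x s₀ hs₀)
  · have hv := hasDerivAt_slice_snd (d0 x s₀ hs₀)
    have h := hasDerivAt_slice_snd (d2 x s₀ hs₀)
    have h' := (hα.add (hγ.mul hv)).sub ((hfd (U (x, s₀))).comp s₀ hv)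
    have h'' := h'.congr_of_eventuallyEq (f₁ := fun r => U2 (x, r)) (by
      filter_upwards [hnear] with s hs
      simpa using hp2 x s hs)
    refine (h.unique h'').trans ?_
    simp only
    ring
  · have h := hasDerivAt_slice_snd (d1 0 s₀ hs₀)
    exact h.unique ((hasDerivAt_const s₀ (0:ℝ)).congr_of_eventuallyEq (by
      filter_upwards [hnear] with s hs using hi s hs))
  · have hv := hasDerivAt_slice_snd (d0 0 s₀ hs₀)
    have h := (((hF (U (0, s₀))).comp s₀ hv).sub ((hγ.div_const 2).mul (hv.pow 2))).sub
      (hα.mul hv)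
    have h' := h.congr_of_eventuallyEq (f₁ := η) (by
      filter_upwards [hnear] with s hs
      simpa using (hen s hs).symm)
    have := hη.unique h'
    rw [this]
    simp
    ring
  · have h := (d0 (τ s₀) s₀ hs₀).hasFDerivAt.comp_hasDerivAt (f := fun s => (τ s, s)) s₀ hpath
    have h' := (hasDerivAt_slice_snd (d0 0 s₀ hs₀)).congr_of_eventuallyEq
      (f₁ := U ∘ fun s => (τ s, s)) (by
        filter_upwards [hnear] with s hs
        simpa using hper s hs 0)
    have := h.unique h'
    rw [split] at this
    have hz : fderiv ℝ U (τ s₀, s₀) (1, 0) = 0 := hT1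
    rw [hz] at this
    simpa using this
  · have h := (d1 (τ s₀) s₀ hs₀).hasFDerivAt.comp_hasDerivAt (f := fun s => (τ s, s)) s₀ hpath
    have h' := (hasDerivAt_const s₀ (0:ℝ)).congr_of_eventuallyEq
      (f₁ := U1 ∘ fun s => (τ s, s)) (by
        filter_upwards [hnear] with s hs
        simpa [hi s hs] using hper1 s hs 0)
    have := h.unique h'
    rw [split] at this
    have hz : fderiv ℝ U1 (τ s₀, s₀) (1, 0) = α s₀ + γ s₀ * U (0, s₀) - f (U (0, s₀)) := by
      have := hp2 (τ s₀) s₀ hs₀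
      rwa [hT0] at this
    rw [hz] at this
    linarith
  · have := hasDerivAt_integral_moving hS hs₀
      (fun x s hs => (hU x s hs).of_le (by norm_num)) hτ
    rwa [hT0] at this
  · have := hasDerivAt_integral_moving (g := fun q => U q ^ 2) hS hs₀
      (fun x s hs => ((hU x s hs).pow 2).of_le (by norm_num)) hτ
    have e : ∀ x, fderiv ℝ (fun q => U q ^ 2) (x, s₀) (0, 1)
        = 2 * (U (x, s₀) * fderiv ℝ U (x, s₀) (0, 1)) := fun x => by
      rw [((d0 x s₀ hs₀).hasFDerivAt.pow 2).fderiv]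
      simp
      ring
    simp only [e, hT0] at this
    rwa [intervalIntegral.integral_const_mul] at this

/-! ### The spectral problem: jumps over a period and Grönwall's inequality -/

/-- The profile data entering the spectral problem: `u` with its derivatives `ux`, `uxx`, and the
coefficients `q = c - f'(u)`, `b = -q' = f''(u) u_x`, all `T`-periodic, with `x = 0` a critical
point of the wave. -/
structure IsWave (T : ℝ) (u ux uxx q b : ℝ → ℝ) : Prop where
  pos : 0 < T
  du : ∀ x, HasDerivAt u (ux x) x
  dux : ∀ x, HasDerivAt ux (uxx x) x
  duxx : ∀ x, HasDerivAt uxx (q x * ux x) x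
  dq : ∀ x, HasDerivAt q (-(b x)) x
  cb : Continuous b
  ux_zero : ux 0 = 0
  ux_T : ux T = 0
  u_T : u T = u 0
  uxx_T : uxx T = uxx 0
  q_T : q T = q 0

/-- `(y0, y1, y2) = (v, v', v'')` for a solution `v` of `∂ₓ(-∂ₓ² + q + k²) v = μ v`, where
`b = -q'`. -/
structure IsSol (q b : ℝ → ℝ) (μ : ℂ) (k : ℝ) (y0 y1 y2 : ℝ → ℂ) : Prop where
  d0 : ∀ x, HasDerivAt y0 (y1 x) x
  d1 : ∀ x, HasDerivAt y1 (y2 x) x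
  d2 : ∀ x, HasDerivAt y2 ((-μ - b x) * y0 x + (q x + (k : ℂ) ^ 2) * y1 x) x

lemma cont_of_deriv {E : Type*} [NormedAddCommGroup E] [NormedSpace ℝ E] {g g' : ℝ → E}
    (h : ∀ x, HasDerivAt g (g' x) x) : Continuous g :=
  continuous_iff_continuousAt.2 fun x => (h x).continuousAt

/-- The jump over a period of `L v`, with `L = -∂ₓ² + q`. -/
lemma jump_L {T : ℝ} {u ux uxx q b : ℝ → ℝ} (W : IsWave T u ux uxx q b) {μ : ℂ} {k : ℝ}
    {y0 y1 y2 : ℝ → ℂ} (h : IsSol q b μ k y0 y1 y2) :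
    (q 0 * y0 T - y2 T) - (q 0 * y0 0 - y2 0)
      = ∫ x in (0:ℝ)..T, (((1 : ℝ) : ℂ)) * (μ * y0 x - (k : ℂ) ^ 2 * y1 x) := by
  have hd : ∀ x, HasDerivAt (fun x => q x * y0 x - y2 x)
      ((((1 : ℝ) : ℂ)) * (μ * y0 x - (k : ℂ) ^ 2 * y1 x)) x := fun x => by
    have := (((W.dq x).ofReal_comp).mul (h.d0 x)).sub (h.d2 x)
    refine this.congr_deriv ?_
    push_cast
    ring
  rw [integral_eq_sub_of_hasDerivAt (fun x _ => hd x)]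
  · rw [W.q_T]
  · have := cont_of_deriv h.d0
    have := cont_of_deriv h.d1
    exact Continuous.intervalIntegrable (by fun_prop) _ _

/-- The jump over a period of `u L v - u_xx v + u_x v'`, whose derivative is `u ∂ₓ(L v)` by
`L u_x = 0`. -/
lemma jump_uL {T : ℝ} {u ux uxx q b : ℝ → ℝ} (W : IsWave T u ux uxx q b) {μ : ℂ} {k : ℝ}
    {y0 y1 y2 : ℝ → ℂ} (h : IsSol q b μ k y0 y1 y2) :
    (u 0 * (q 0 * y0 T - y2 T) - uxx 0 * y0 T) - (u 0 * (q 0 * y0 0 - y2 0) - uxx 0 * y0 0)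
      = ∫ x in (0:ℝ)..T, (u x : ℂ) * (μ * y0 x - (k : ℂ) ^ 2 * y1 x) := by
  have hd : ∀ x, HasDerivAt (fun x => u x * (q x * y0 x - y2 x) - uxx x * y0 x + ux x * y1 x)
      ((u x : ℂ) * (μ * y0 x - (k : ℂ) ^ 2 * y1 x)) x := fun x => by
    have h1 := (((W.dq x).ofReal_comp).mul (h.d0 x)).sub (h.d2 x)
    have h2 := ((((W.du x).ofReal_comp).mul h1).sub
      (((W.duxx x).ofReal_comp).mul (h.d0 x))).add (((W.dux x).ofReal_comp).mul (h.d1 x))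
    refine h2.congr_deriv ?_
    simp only [Pi.sub_apply, Pi.mul_apply]
    push_cast
    ring
  rw [integral_eq_sub_of_hasDerivAt (fun x _ => hd x)]
  · rw [W.q_T, W.u_T, W.uxx_T, W.ux_T, W.ux_zero]
    simp
  · have := cont_of_deriv h.d0
    have := cont_of_deriv h.d1
    have := cont_of_deriv W.du
    exact Continuous.intervalIntegrable (by fun_prop) _ _

/-- Grönwall's inequality for the inhomogeneous spectral problem with zero initial data, uniform in
the spectral parameters `‖μ‖ ≤ 1`, `|k| ≤ 1`. -/
lemma gronwall_uniform {T : ℝ} {u ux uxx q b : ℝ → ℝ} (W : IsWave T u ux uxx q b) :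
    ∃ C : ℝ, 0 ≤ C ∧ ∀ (μ : ℂ) (k : ℝ), ‖μ‖ ≤ 1 → |k| ≤ 1 →
      ∀ (e0 e1 e2 r : ℝ → ℂ) (δ : ℝ), e0 0 = 0 → e1 0 = 0 → e2 0 = 0 →
      (∀ x, HasDerivAt e0 (e1 x) x) → (∀ x, HasDerivAt e1 (e2 x) x) →
      (∀ x, HasDerivAt e2 ((-μ - b x) * e0 x + (q x + (k : ℂ) ^ 2) * e1 x + r x) x) →
      (∀ x ∈ Set.Icc 0 T, ‖r x‖ ≤ δ) →
      ∀ x ∈ Set.Icc 0 T, ‖e0 x‖ ≤ C * δ ∧ ‖e1 x‖ ≤ C * δ := by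
  obtain ⟨B, hB⟩ := isCompact_Icc (a := (0:ℝ)) (b := T) |>.exists_bound_of_continuousOn
    W.cb.continuousOn
  obtain ⟨B', hB'⟩ := isCompact_Icc (a := (0:ℝ)) (b := T) |>.exists_bound_of_continuousOn
    (cont_of_deriv W.dq).continuousOn
  have hT := W.pos
  have hB0 : 0 ≤ B := (norm_nonneg _).trans (hB 0 ⟨le_rfl, hT.le⟩)
  have hB0' : 0 ≤ B' := (norm_nonneg _).trans (hB' 0 ⟨le_rfl, hT.le⟩)
  set K := B + B' + 2 with hK
  have hKpos : 0 < K := by positivity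
  refine ⟨(Real.exp (K * T) - 1) / K, ?_, ?_⟩
  · have := Real.one_le_exp (mul_nonneg hKpos.le hT.le)
    exact div_nonneg (by linarith) hKpos.le
  intro μ k hμ hk e0 e1 e2 r δ h0 h1 h2 d0 d1 d2 hr x hx
  have hδ : 0 ≤ δ := (norm_nonneg _).trans (hr x hx)
  have hd : ∀ x, HasDerivAt (fun x => (e0 x, e1 x, e2 x))
      (e1 x, e2 x, (-μ - b x) * e0 x + (q x + (k : ℂ) ^ 2) * e1 x + r x) x := fun x =>
    (d0 x).prodMk ((d1 x).prodMk (d2 x))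
  have key := norm_le_gronwallBound_of_norm_deriv_right_le (δ := 0) (K := K) (ε := δ)
    (a := 0) (b := T) (cont_of_deriv hd).continuousOn (fun x _ => (hd x).hasDerivWithinAt)
    (by simp [h0, h1, h2]) (fun x hx => by
      have hxI : x ∈ Set.Icc 0 T := ⟨hx.1, hx.2.le⟩
      set n := ‖(e0 x, e1 x, e2 x)‖ with hn
      have n0 : ‖e0 x‖ ≤ n := norm_fst_le (e0 x, e1 x, e2 x)
      have n12 : ‖(e1 x, e2 x)‖ ≤ n := norm_snd_le (e0 x, e1 x, e2 x)
      have n1 : ‖e1 x‖ ≤ n := (norm_fst_le (e1 x, e2 x)).trans n12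
      have n2 : ‖e2 x‖ ≤ n := (norm_snd_le (e1 x, e2 x)).trans n12
      have hn0 : 0 ≤ n := norm_nonneg _
      have hKn : n ≤ K * n + δ := by nlinarith
      have hb : ‖-μ - (b x : ℂ)‖ ≤ 1 + B := by
        refine (norm_sub_le _ _).trans (add_le_add (by simpa using hμ) ?_)
        rw [Complex.norm_real]; exact hB x hxI
      have hq : ‖(q x : ℂ) + (k : ℂ) ^ 2‖ ≤ B' + 1 := by
        refine (norm_add_le _ _).trans (add_le_add ?_ ?_)
        · rw [Complex.norm_real]; exact hB' x hxI
        · rw [norm_pow, Complex.norm_real, Real.norm_eq_abs]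
          exact pow_le_one₀ (abs_nonneg _) hk
      have h3 : ‖(-μ - b x) * e0 x + (q x + (k : ℂ) ^ 2) * e1 x + r x‖ ≤ K * n + δ := by
        calc _ ≤ ‖-μ - (b x : ℂ)‖ * ‖e0 x‖ + ‖(q x : ℂ) + (k : ℂ) ^ 2‖ * ‖e1 x‖ + ‖r x‖ := by
              refine (norm_add_le _ _).trans (add_le_add_left ((norm_add_le _ _).trans ?_) _)
              rw [norm_mul, norm_mul]
          _ ≤ (1 + B) * n + (B' + 1) * n + δ := by
              gcongr
              exact hr x hxI
          _ = K * n + δ := by rw [hK]; ring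
      rw [Prod.norm_def, Prod.norm_def]
      exact max_le (n1.trans hKn) (max_le (n2.trans hKn) h3)) x hx
  rw [gronwallBound_of_K_ne_0 hKpos.ne'] at key
  simp only [zero_mul, zero_add, sub_zero] at key
  have hle : δ / K * (Real.exp (K * x) - 1) ≤ (Real.exp (K * T) - 1) / K * δ := by
    have : Real.exp (K * x) ≤ Real.exp (K * T) :=
      Real.exp_le_exp.2 (mul_le_mul_of_nonneg_left hx.2 hKpos.le)
    calc _ ≤ δ / K * (Real.exp (K * T) - 1) := by gcongr
      _ = _ := by ring
  exact ⟨(norm_fst_le (e0 x, e1 x, e2 x)).trans (key.trans hle),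
    ((norm_fst_le (e1 x, e2 x)).trans (norm_snd_le (e0 x, e1 x, e2 x))).trans (key.trans hle)⟩

lemma integral_close {T : ℝ} (hT : 0 ≤ T) {g : ℝ → ℝ} (hg : Continuous g) {G : ℝ}
    (hG : ∀ x ∈ Set.Icc 0 T, ‖g x‖ ≤ G) {μ : ℂ} {k ε : ℝ} (hμ : ‖μ‖ ≤ ε) (hk : |k| ≤ ε)
    (hε : ε ≤ 1) {y0 y1 z0 z1 : ℝ → ℂ} (cy0 : Continuous y0) (cy1 : Continuous y1)
    (cz0 : Continuous z0) (cz1 : Continuous z1) {δ : ℝ}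
    (h : ∀ x ∈ Set.Icc 0 T, ‖y0 x - z0 x‖ ≤ δ ∧ ‖y1 x - z1 x‖ ≤ δ) :
    ‖(∫ x in (0:ℝ)..T, (g x : ℂ) * (μ * y0 x - (k : ℂ) ^ 2 * y1 x))
      - ∫ x in (0:ℝ)..T, (g x : ℂ) * (μ * z0 x - (k : ℂ) ^ 2 * z1 x)‖ ≤ 2 * G * T * (ε * δ) := by
  have hG0 : 0 ≤ G := (norm_nonneg _).trans (hG 0 ⟨le_rfl, hT⟩)
  have hδ0 : 0 ≤ δ := (norm_nonneg _).trans (h 0 ⟨le_rfl, hT⟩).1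
  have hε0 : 0 ≤ ε := (norm_nonneg _).trans hμ
  rw [← integral_sub (Continuous.intervalIntegrable (by fun_prop) _ _)
    (Continuous.intervalIntegrable (by fun_prop) _ _)]
  have key : ∀ x ∈ Set.uIoc 0 T, ‖(g x : ℂ) * (μ * y0 x - (k : ℂ) ^ 2 * y1 x)
      - (g x : ℂ) * (μ * z0 x - (k : ℂ) ^ 2 * z1 x)‖ ≤ G * (ε * δ + ε * δ) := by
    intro x hx
    rw [Set.uIoc_of_le hT] at hx
    have hxI : x ∈ Set.Icc 0 T := ⟨hx.1.le, hx.2⟩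
    have e : (g x : ℂ) * (μ * y0 x - (k : ℂ) ^ 2 * y1 x)
      - (g x : ℂ) * (μ * z0 x - (k : ℂ) ^ 2 * z1 x)
      = (g x : ℂ) * (μ * (y0 x - z0 x) - (k : ℂ) ^ 2 * (y1 x - z1 x)) := by ring
    have hk2 : ‖(k : ℂ) ^ 2‖ ≤ ε := by
      rw [norm_pow, Complex.norm_real, Real.norm_eq_abs]
      nlinarith [abs_nonneg k]
    rw [e, norm_mul, Complex.norm_real]
    refine mul_le_mul (hG x hxI) ((norm_sub_le _ _).trans ?_) (norm_nonneg _) hG0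
    rw [norm_mul, norm_mul]
    exact add_le_add (mul_le_mul hμ (h x hxI).1 (norm_nonneg _) hε0)
      (mul_le_mul hk2 (h x hxI).2 (norm_nonneg _) hε0)
  refine (norm_integral_le_of_norm_le_const key).trans (le_of_eq ?_)
  rw [sub_zero, abs_of_nonneg hT]
  ring

/-! ### Leading order of the jumps -/

lemma exists_bound_Icc (T : ℝ) {g : ℝ → ℝ} (hg : Continuous g) :
    ∃ B : ℝ, 0 ≤ B ∧ ∀ x ∈ Set.Icc 0 T, ‖g x‖ ≤ B := by
  obtain ⟨B, hB⟩ := isCompact_Icc (a := (0:ℝ)) (b := T) |>.exists_bound_of_continuousOn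
    hg.continuousOn
  exact ⟨max B 0, le_max_right _ _, fun x hx => (hB x hx).trans (le_max_left _ _)⟩

lemma integral_split (T : ℝ) {g v w : ℝ → ℝ} (hg : Continuous g) (hv : Continuous v)
    (hw : Continuous w) (A B : ℂ) :
    ∫ x in (0:ℝ)..T, (g x : ℂ) * (A * v x - B * w x)
      = A * ((∫ x in (0:ℝ)..T, g x * v x : ℝ) : ℂ) - B * ((∫ x in (0:ℝ)..T, g x * w x : ℝ) : ℂ) := by
  rw [← intervalIntegral.integral_ofReal, ← intervalIntegral.integral_ofReal,
    ← intervalIntegral.integral_const_mul, ← intervalIntegral.integral_const_mul,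
    ← intervalIntegral.integral_sub (Continuous.intervalIntegrable (by fun_prop) _ _)
    (Continuous.intervalIntegrable (by fun_prop) _ _)]
  refine integral_congr fun x _ => ?_
  push_cast
  ring

lemma norm_sq_le {k ε : ℝ} (hk : |k| ≤ ε) : ‖(k : ℂ) ^ 2‖ ≤ ε ^ 2 := by
  rw [norm_pow, Complex.norm_real, Real.norm_eq_abs]
  exact pow_le_pow_left₀ (abs_nonneg _) hk 2

/-- For the solution `y` whose initial data are those of an element `v` of the kernel of `∂ₓ L`, the
leading order of the jumps over a period of `y'`, `L y` and `u L y - u_xx y`. Grönwall gives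
`y = v + O(ε)`, and the last two jumps gain one more order from `jump_L` and `jump_uL`. -/
lemma column_kernel {T : ℝ} {u ux uxx q b : ℝ → ℝ} (W : IsWave T u ux uxx q b)
    {v v1 v2 : ℝ → ℝ} (dv : ∀ x, HasDerivAt v (v1 x) x) (dv1 : ∀ x, HasDerivAt v1 (v2 x) x)
    (dv2 : ∀ x, HasDerivAt v2 (-(b x) * v x + q x * v1 x) x) :
    ∃ K : ℝ, 0 ≤ K ∧ ∀ (μ : ℂ) (k ε : ℝ), ‖μ‖ ≤ ε → |k| ≤ ε → ε ≤ 1 →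
      ∀ y0 y1 y2 : ℝ → ℂ, IsSol q b μ k y0 y1 y2 → y0 0 = v 0 → y1 0 = v1 0 → y2 0 = v2 0 →
      ‖(y1 T - y1 0) - ((v1 T - v1 0 : ℝ) : ℂ)‖ ≤ K * ε ∧
      ‖((q 0 * y0 T - y2 T) - (q 0 * y0 0 - y2 0))
        - μ * ((∫ x in (0:ℝ)..T, v x : ℝ) : ℂ)‖ ≤ K * ε ^ 2 ∧
      ‖((u 0 * (q 0 * y0 T - y2 T) - uxx 0 * y0 T) - (u 0 * (q 0 * y0 0 - y2 0) - uxx 0 * y0 0))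
        - μ * ((∫ x in (0:ℝ)..T, u x * v x : ℝ) : ℂ)‖ ≤ K * ε ^ 2 := by
  obtain ⟨C, hC, hgr⟩ := gronwall_uniform W
  have cv := cont_of_deriv dv
  have cv1 := cont_of_deriv dv1
  have cu := cont_of_deriv W.du
  have hT := W.pos
  obtain ⟨B, hB, hvB⟩ := exists_bound_Icc T cv
  obtain ⟨B1, hB1, hv1B⟩ := exists_bound_Icc T cv1
  obtain ⟨G, hG, huG⟩ := exists_bound_Icc T cu
  set R := B + B1 with hR
  have hR0 : 0 ≤ R := by positivity
  set I1 := |∫ x in (0:ℝ)..T, (1:ℝ) * v1 x| with hI1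
  set I2 := |∫ x in (0:ℝ)..T, u x * v1 x| with hI2
  refine ⟨C * R + (2 * 1 * T * (C * R) + I1) + (2 * G * T * (C * R) + I2), by positivity, ?_⟩
  intro μ k ε hμ hk hε y0 y1 y2 hy i0 i1 i2
  have hε0 : 0 ≤ ε := (norm_nonneg _).trans hμ
  have hclose : ∀ x ∈ Set.Icc 0 T, ‖y0 x - v x‖ ≤ C * (R * ε) ∧ ‖y1 x - v1 x‖ ≤ C * (R * ε) := by
    refine hgr μ k (hμ.trans hε) (hk.trans hε) (fun x => y0 x - v x) (fun x => y1 x - v1 x)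
      (fun x => y2 x - v2 x) (fun x => -μ * v x + (k : ℂ) ^ 2 * v1 x) (R * ε)
      (by simp [i0]) (by simp [i1]) (by simp [i2])
      (fun x => (hy.d0 x).sub (dv x).ofReal_comp) (fun x => (hy.d1 x).sub (dv1 x).ofReal_comp)
      (fun x => ((hy.d2 x).sub (dv2 x).ofReal_comp).congr_deriv ?_) (fun x hx => ?_)
    · push_cast; ring
    · refine (norm_add_le _ _).trans ?_
      rw [norm_mul, norm_mul, norm_neg, Complex.norm_real, Complex.norm_real]
      have h1 := hvB x hx
      have h2 := hv1B x hx
      have h3 := norm_sq_le hk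
      calc _ ≤ ε * B + ε ^ 2 * B1 := by gcongr
        _ ≤ ε * B + ε * B1 := by gcongr; nlinarith
        _ = R * ε := by rw [hR]; ring
  have cy0 := cont_of_deriv hy.d0
  have cy1 := cont_of_deriv hy.d1
  have key : ∀ (g : ℝ → ℝ) (G I : ℝ), Continuous g → (∀ x ∈ Set.Icc 0 T, ‖g x‖ ≤ G) →
      |∫ x in (0:ℝ)..T, g x * v1 x| = I →
      ‖(∫ x in (0:ℝ)..T, (g x : ℂ) * (μ * y0 x - (k : ℂ) ^ 2 * y1 x))
        - μ * ((∫ x in (0:ℝ)..T, g x * v x : ℝ) : ℂ)‖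
        ≤ (2 * G * T * (C * R) + I) * ε ^ 2 := by
    intro g G I hg hgG hI
    have h1 := integral_close hT.le hg hgG hμ hk hε cy0 cy1
      (z0 := fun x => (v x : ℂ)) (z1 := fun x => (v1 x : ℂ)) (by fun_prop) (by fun_prop) hclose
    rw [integral_split T hg cv cv1] at h1
    have h2 : ‖(k : ℂ) ^ 2 * ((∫ x in (0:ℝ)..T, g x * v1 x : ℝ) : ℂ)‖ ≤ ε ^ 2 * I := by
      rw [norm_mul, Complex.norm_real, Real.norm_eq_abs, hI]
      have : 0 ≤ I := hI ▸ abs_nonneg _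
      exact mul_le_mul_of_nonneg_right (norm_sq_le hk) this
    have h3 := (norm_sub_le _ _).trans (add_le_add h1 h2)
    refine (le_of_eq (congrArg _ ?_)).trans (h3.trans (le_of_eq ?_))
    · ring
    · ring
  refine ⟨?_, ?_, ?_⟩
  · have := (hclose T ⟨hT.le, le_rfl⟩).2
    rw [i1]
    have e : y1 T - (v1 0 : ℂ) - ((v1 T - v1 0 : ℝ) : ℂ) = y1 T - v1 T := by push_cast; ring
    rw [e]
    refine this.trans ?_
    rw [← mul_assoc]
    refine mul_le_mul_of_nonneg_right ?_ hε0
    have : 0 ≤ 2 * 1 * T * (C * R) + I1 := by positivity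
    have : 0 ≤ 2 * G * T * (C * R) + I2 := by positivity
    linarith
  · rw [jump_L W hy]
    have h := key (fun _ => 1) 1 I1 continuous_const (fun x _ => by simp) rfl
    simp only [one_mul] at h ⊢
    refine h.trans (mul_le_mul_of_nonneg_right ?_ (by positivity))
    have : 0 ≤ C * R := by positivity
    have : 0 ≤ 2 * G * T * (C * R) + I2 := by positivity
    linarith
  · rw [jump_uL W hy]
    refine (key u G I2 cu huG rfl).trans (mul_le_mul_of_nonneg_right ?_ (by positivity))
    have : 0 ≤ C * R := by positivity
    have : 0 ≤ 2 * 1 * T * (C * R) + I1 := by positivity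
    linarith

/-- The analogue of `column_kernel` for the solution `y` with the initial data of `u_x - μ v`, where
`∂ₓ L (-v) = u_x` (so `v = ∂u/∂c`); here `y = u_x - μ v + O(ε²)`. As `u_x` is periodic and
orthogonal over a period to `1` and `u`, every jump starts one order later, and
`∫ u u_xx = -∫ u_x²` produces the term in `k²`. -/
lemma column_translation {T : ℝ} {u ux uxx q b : ℝ → ℝ} (W : IsWave T u ux uxx q b)
    {v v1 v2 : ℝ → ℝ} (dv : ∀ x, HasDerivAt v (v1 x) x) (dv1 : ∀ x, HasDerivAt v1 (v2 x) x)
    (dv2 : ∀ x, HasDerivAt v2 (ux x + -(b x) * v x + q x * v1 x) x) :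
    ∃ K : ℝ, 0 ≤ K ∧ ∀ (μ : ℂ) (k ε : ℝ), ‖μ‖ ≤ ε → |k| ≤ ε → ε ≤ 1 →
      ∀ y0 y1 y2 : ℝ → ℂ, IsSol q b μ k y0 y1 y2 → y0 0 = ux 0 - μ * v 0 →
      y1 0 = uxx 0 - μ * v1 0 → y2 0 = q 0 * ux 0 - μ * v2 0 →
      ‖(y1 T - y1 0) - -μ * ((v1 T - v1 0 : ℝ) : ℂ)‖ ≤ K * ε ^ 2 ∧
      ‖((q 0 * y0 T - y2 T) - (q 0 * y0 0 - y2 0))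
        - -μ ^ 2 * ((∫ x in (0:ℝ)..T, v x : ℝ) : ℂ)‖ ≤ K * ε ^ 3 ∧
      ‖((u 0 * (q 0 * y0 T - y2 T) - uxx 0 * y0 T) - (u 0 * (q 0 * y0 0 - y2 0) - uxx 0 * y0 0))
        - (-μ ^ 2 * ((∫ x in (0:ℝ)..T, u x * v x : ℝ) : ℂ)
          + (k : ℂ) ^ 2 * ((∫ x in (0:ℝ)..T, ux x ^ 2 : ℝ) : ℂ))‖ ≤ K * ε ^ 3 := by
  obtain ⟨C, hC, hgr⟩ := gronwall_uniform W
  have cv := cont_of_deriv dv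
  have cv1 := cont_of_deriv dv1
  have cu := cont_of_deriv W.du
  have cux := cont_of_deriv W.dux
  have cuxx := cont_of_deriv W.duxx
  have hT := W.pos
  obtain ⟨B, hB, hvB⟩ := exists_bound_Icc T cv
  obtain ⟨B1, hB1, hv1B⟩ := exists_bound_Icc T cv1
  obtain ⟨B2, hB2, huxxB⟩ := exists_bound_Icc T cuxx
  obtain ⟨G, hG, huG⟩ := exists_bound_Icc T cu
  set R := B + (B2 + B1) with hR
  have hR0 : 0 ≤ R := by positivity
  set I1 := |∫ x in (0:ℝ)..T, (1:ℝ) * v1 x| with hI1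
  set I2 := |∫ x in (0:ℝ)..T, u x * v1 x| with hI2
  refine ⟨C * R + (2 * 1 * T * (C * R) + I1) + (2 * G * T * (C * R) + I2), by positivity, ?_⟩
  intro μ k ε hμ hk hε y0 y1 y2 hy i0 i1 i2
  have hε0 : 0 ≤ ε := (norm_nonneg _).trans hμ
  have hclose : ∀ x ∈ Set.Icc 0 T, ‖y0 x - (ux x - μ * v x)‖ ≤ C * (R * ε ^ 2)
      ∧ ‖y1 x - (uxx x - μ * v1 x)‖ ≤ C * (R * ε ^ 2) := by
    refine hgr μ k (hμ.trans hε) (hk.trans hε) (fun x => y0 x - (ux x - μ * v x))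
      (fun x => y1 x - (uxx x - μ * v1 x)) (fun x => y2 x - (q x * ux x - μ * v2 x))
      (fun x => μ ^ 2 * v x + (k : ℂ) ^ 2 * (uxx x - μ * v1 x)) (R * ε ^ 2)
      (by simp [i0]) (by simp [i1]) (by simp [i2])
      (fun x => (hy.d0 x).sub ((W.dux x).ofReal_comp.sub ((dv x).ofReal_comp.const_mul μ)))
      (fun x => ((hy.d1 x).sub ((W.duxx x).ofReal_comp.sub
        ((dv1 x).ofReal_comp.const_mul μ))).congr_deriv (by push_cast; ring))
      (fun x => ((hy.d2 x).sub ((((W.dq x).ofReal_comp).mul (W.dux x).ofReal_comp).sub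
        ((dv2 x).ofReal_comp.const_mul μ))).congr_deriv ?_) (fun x hx => ?_)
    · push_cast; ring
    · have h1 := hvB x hx
      have h2 := hv1B x hx
      have h3 := norm_sq_le hk
      have h4 : ‖(uxx x : ℂ) - μ * v1 x‖ ≤ B2 + B1 := by
        refine (norm_sub_le _ _).trans ?_
        rw [norm_mul, Complex.norm_real, Complex.norm_real]
        refine add_le_add (huxxB x hx) ?_
        nlinarith [norm_nonneg (v1 x), hμ.trans hε, norm_nonneg μ]
      refine (norm_add_le _ _).trans ?_
      rw [norm_mul, norm_mul, Complex.norm_real, norm_pow]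
      calc _ ≤ ε ^ 2 * B + ε ^ 2 * (B2 + B1) := by gcongr
        _ = R * ε ^ 2 := by rw [hR]; ring
  have cy0 := cont_of_deriv hy.d0
  have cy1 := cont_of_deriv hy.d1
  have key : ∀ (g : ℝ → ℝ) (G I : ℝ), Continuous g → (∀ x ∈ Set.Icc 0 T, ‖g x‖ ≤ G) →
      |∫ x in (0:ℝ)..T, g x * v1 x| = I → (∫ x in (0:ℝ)..T, g x * ux x) = 0 →
      ‖(∫ x in (0:ℝ)..T, (g x : ℂ) * (μ * y0 x - (k : ℂ) ^ 2 * y1 x))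
        - (-μ ^ 2 * ((∫ x in (0:ℝ)..T, g x * v x : ℝ) : ℂ)
          - (k : ℂ) ^ 2 * ((∫ x in (0:ℝ)..T, g x * uxx x : ℝ) : ℂ))‖
        ≤ (2 * G * T * (C * R) + I) * ε ^ 3 := by
    intro g G I hg hgG hI hz
    have h1 := integral_close hT.le hg hgG hμ hk hε cy0 cy1
      (z0 := fun x => (ux x - μ * v x : ℂ)) (z1 := fun x => (uxx x - μ * v1 x : ℂ))
      (by fun_prop) (by fun_prop) hclose
    have e : (∫ x in (0:ℝ)..T, (g x : ℂ) * (μ * (ux x - μ * v x)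
          - (k : ℂ) ^ 2 * (uxx x - μ * v1 x)))
        = (∫ x in (0:ℝ)..T, (g x : ℂ) * (μ * ux x - (k : ℂ) ^ 2 * uxx x))
          - μ * ∫ x in (0:ℝ)..T, (g x : ℂ) * (μ * v x - (k : ℂ) ^ 2 * v1 x) := by
      rw [← intervalIntegral.integral_const_mul,
        ← intervalIntegral.integral_sub (Continuous.intervalIntegrable (by fun_prop) _ _)
        (Continuous.intervalIntegrable (by fun_prop) _ _)]
      refine integral_congr fun x _ => ?_
      ring
    rw [e, integral_split T hg cv cv1, integral_split T hg cux cuxx, hz] at h1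
    have h2 : ‖μ * ((k : ℂ) ^ 2 * ((∫ x in (0:ℝ)..T, g x * v1 x : ℝ) : ℂ))‖
        ≤ ε * (ε ^ 2 * I) := by
      rw [norm_mul, norm_mul, Complex.norm_real, Real.norm_eq_abs, hI]
      have : 0 ≤ I := hI ▸ abs_nonneg _
      exact mul_le_mul hμ (mul_le_mul_of_nonneg_right (norm_sq_le hk) this) (by positivity) hε0
    have h3 := (norm_add_le _ _).trans (add_le_add h1 h2)
    refine (le_of_eq (congrArg _ ?_)).trans (h3.trans (le_of_eq ?_))
    · push_cast; ring
    · ring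
  refine ⟨?_, ?_, ?_⟩
  · have := (hclose T ⟨hT.le, le_rfl⟩).2
    rw [i1]
    have e : y1 T - ((uxx 0 : ℂ) - μ * v1 0) - -μ * ((v1 T - v1 0 : ℝ) : ℂ)
        = y1 T - (uxx T - μ * v1 T) := by rw [W.uxx_T]; push_cast; ring
    rw [e]
    refine this.trans ?_
    rw [← mul_assoc]
    refine mul_le_mul_of_nonneg_right ?_ (by positivity)
    have : 0 ≤ 2 * 1 * T * (C * R) + I1 := by positivity
    have : 0 ≤ 2 * G * T * (C * R) + I2 := by positivity
    linarith
  · rw [jump_L W hy]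
    have hz : (∫ x in (0:ℝ)..T, (1:ℝ) * ux x) = 0 := by
      simp only [one_mul]
      rw [integral_eq_sub_of_hasDerivAt (fun x _ => W.du x) (cux.intervalIntegrable _ _), W.u_T,
        sub_self]
    have hz' : (∫ x in (0:ℝ)..T, uxx x) = 0 := by
      rw [integral_eq_sub_of_hasDerivAt (fun x _ => W.dux x) (cuxx.intervalIntegrable _ _), W.ux_T,
        W.ux_zero, sub_self]
    have h := key (fun _ => 1) 1 I1 continuous_const (fun x _ => by simp) rfl hz
    simp only [one_mul] at h ⊢
    rw [hz', Complex.ofReal_zero, mul_zero, sub_zero] at h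
    refine h.trans (mul_le_mul_of_nonneg_right ?_ (by positivity))
    have : 0 ≤ C * R := by positivity
    have : 0 ≤ 2 * G * T * (C * R) + I2 := by positivity
    linarith
  · rw [jump_uL W hy]
    have hz : (∫ x in (0:ℝ)..T, u x * ux x) = 0 := by
      have hd : ∀ x, HasDerivAt (fun x => u x ^ 2 / 2) (u x * ux x) x := fun x =>
        (((W.du x).pow 2).div_const 2).congr_deriv (by simp; ring)
      rw [integral_eq_sub_of_hasDerivAt (fun x _ => hd x)
        (Continuous.intervalIntegrable (by fun_prop) _ _), W.u_T, sub_self]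
    have hz' : (∫ x in (0:ℝ)..T, u x * uxx x) = -∫ x in (0:ℝ)..T, ux x ^ 2 := by
      have hd : ∀ x, HasDerivAt (fun x => u x * ux x) (ux x ^ 2 + u x * uxx x) x := fun x =>
        ((W.du x).mul (W.dux x)).congr_deriv (by ring)
      have h := integral_eq_sub_of_hasDerivAt (a := (0:ℝ)) (b := T) (fun x _ => hd x)
        (Continuous.intervalIntegrable (by fun_prop) _ _)
      rw [intervalIntegral.integral_add (Continuous.intervalIntegrable (by fun_prop) _ _)
        (Continuous.intervalIntegrable (by fun_prop) _ _), W.ux_T, W.ux_zero] at h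
      linarith
    have h := key u G I2 cu huG rfl hz
    rw [hz', Complex.ofReal_neg, mul_neg, sub_neg_eq_add] at h
    refine h.trans (mul_le_mul_of_nonneg_right ?_ (by positivity))
    have : 0 ≤ C * R := by positivity
    have : 0 ≤ 2 * 1 * T * (C * R) + I1 := by positivity
    linarith

/-! ### Expansion of the determinant -/

/-- If `fᵢ = pᵢ + O(εⁿ⁺¹)` and `pᵢ = O(εⁿ)` with `n = nᵢ`, then `f₁f₂f₃ = p₁p₂p₃ + O(εᵐ⁺¹)` with
`m = n₁ + n₂ + n₃`. -/
lemma mul_three_close {l : Filter (ℂ × ℝ)} {ε : ℂ × ℝ → ℝ} (hε : ∀ᶠ q in l, ‖ε q‖ ≤ 1)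
    {f₁ f₂ f₃ p₁ p₂ p₃ : ℂ × ℝ → ℂ} {n₁ n₂ n₃ : ℕ}
    (h₁ : (fun q => f₁ q - p₁ q) =O[l] fun q => ε q ^ (n₁ + 1)) (g₁ : p₁ =O[l] fun q => ε q ^ n₁)
    (h₂ : (fun q => f₂ q - p₂ q) =O[l] fun q => ε q ^ (n₂ + 1)) (g₂ : p₂ =O[l] fun q => ε q ^ n₂)
    (h₃ : (fun q => f₃ q - p₃ q) =O[l] fun q => ε q ^ (n₃ + 1)) (g₃ : p₃ =O[l] fun q => ε q ^ n₃) :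
    (fun q => f₁ q * f₂ q * f₃ q - p₁ q * p₂ q * p₃ q)
      =O[l] fun q => ε q ^ (n₁ + n₂ + n₃ + 1) := by
  have up : ∀ n : ℕ, (fun q => ε q ^ (n + 1)) =O[l] fun q => ε q ^ n := fun n => by
    refine IsBigO.of_bound 1 ?_
    filter_upwards [hε] with q hq
    rw [pow_succ, norm_mul, one_mul]
    exact mul_le_of_le_one_right (norm_nonneg _) hq
  have F : ∀ {f p : ℂ × ℝ → ℂ} {n : ℕ}, ((fun q => f q - p q) =O[l] fun q => ε q ^ (n + 1)) →
      (p =O[l] fun q => ε q ^ n) → f =O[l] fun q => ε q ^ n := fun {f p n} h g => by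
    simpa using (h.trans (up n)).add g
  have a := (h₁.mul (F h₂ g₂)).mul (F h₃ g₃)
  have b := (g₁.mul h₂).mul (F h₃ g₃)
  have c := (g₁.mul g₂).mul h₃
  have e1 : ∀ q, ε q ^ (n₁ + 1) * ε q ^ n₂ * ε q ^ n₃ = ε q ^ (n₁ + n₂ + n₃ + 1) := fun q => by ring
  have e2 : ∀ q, ε q ^ n₁ * ε q ^ (n₂ + 1) * ε q ^ n₃ = ε q ^ (n₁ + n₂ + n₃ + 1) := fun q => by ring
  have e3 : ∀ q, ε q ^ n₁ * ε q ^ n₂ * ε q ^ (n₃ + 1) = ε q ^ (n₁ + n₂ + n₃ + 1) := fun q => by ring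
  simp only [e1] at a
  simp only [e2] at b
  simp only [e3] at c
  refine ((a.add b).add c).congr_left fun q => ?_
  ring

/-- Determinants of two matrices agree up to `O(ε⁴)` when their entries agree to relative order `ε`
for the weights `(1, 0, 0)` on columns and `(0, 1, 1)` on rows: each term of the determinant has
total weight `3`. -/
lemma det_close {l : Filter (ℂ × ℝ)} {ε : ℂ × ℝ → ℝ} (hε : ∀ᶠ q in l, ‖ε q‖ ≤ 1)
    {N P : ℂ × ℝ → Matrix (Fin 3) (Fin 3) ℂ} {w : Fin 3 → Fin 3 → ℕ}
    (hw : w = ![![1, 0, 0], ![2, 1, 1], ![2, 1, 1]])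
    (h : ∀ i j, (fun q => N q i j - P q i j) =O[l] fun q => ε q ^ (w i j + 1))
    (g : ∀ i j, (fun q => P q i j) =O[l] fun q => ε q ^ w i j) :
    (fun q => (N q).det - (P q).det) =O[l] fun q => ε q ^ 4 := by
  have t : ∀ i j k : Fin 3, w 0 i + w 1 j + w 2 k + 1 = 4 →
      (fun q => N q 0 i * N q 1 j * N q 2 k - P q 0 i * P q 1 j * P q 2 k)
        =O[l] fun q => ε q ^ 4 := fun i j k hijk => by
    have := mul_three_close hε (h 0 i) (g 0 i) (h 1 j) (g 1 j) (h 2 k) (g 2 k)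
    rwa [hijk] at this
  have := (((((t 0 1 2 (by simp [hw])).sub (t 0 2 1 (by simp [hw]))).sub
    (t 1 0 2 (by simp [hw]))).add (t 1 2 0 (by simp [hw]))).add
    (t 2 0 1 (by simp [hw]))).sub (t 2 1 0 (by simp [hw]))
  refine this.congr_left fun q => ?_
  rw [Matrix.det_fin_three, Matrix.det_fin_three]
  ring

/-- The columns of `Y A`, with `Y` a matrix solution of `Y' = H Y` and `A` constant, are solutions. -/
lemma isSol_of_matrix {q b : ℝ → ℝ} {μ : ℂ} {k : ℝ} {H Y : ℝ → Matrix (Fin 3) (Fin 3) ℂ}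
    (hH : ∀ x, H x = !![0, 1, 0; 0, 0, 1; -μ - b x, q x + (k : ℂ) ^ 2, 0])
    (hY : ∀ x i j, HasDerivAt (fun y => Y y i j) ((H x * Y x) i j) x)
    (A : Matrix (Fin 3) (Fin 3) ℂ) (j : Fin 3) :
    IsSol q b μ k (fun x => (Y x * A) 0 j) (fun x => (Y x * A) 1 j) (fun x => (Y x * A) 2 j) := by
  have key : ∀ x i, HasDerivAt (fun y => (Y y * A) i j) ((H x * (Y x * A)) i j) x := fun x i => by
    have := (((hY x i 0).mul_const (A 0 j)).add ((hY x i 1).mul_const (A 1 j))).add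
      ((hY x i 2).mul_const (A 2 j))
    have e : (fun y => (Y y * A) i j)
        = fun y => Y y i 0 * A 0 j + Y y i 1 * A 1 j + Y y i 2 * A 2 j := by
      funext y; rw [Matrix.mul_apply, Fin.sum_univ_three]
    rw [e, ← Matrix.mul_assoc, Matrix.mul_apply, Fin.sum_univ_three]
    exact this
  refine ⟨fun x => (key x 0).congr_deriv ?_, fun x => (key x 1).congr_deriv ?_,
    fun x => (key x 2).congr_deriv ?_⟩ <;>
  · rw [Matrix.mul_apply, Fin.sum_univ_three, hH]
    simp

/-- The expansion, with the parameter derivatives of `T`, `M`, `P` replaced by the data of the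
three variations `va`, `vE`, `vc` of the wave: `T_a` enters through the jump `va1 T` and
`M_a = T_a u(0) + ∫ u_a`, `P_a = T_a u(0)² + 2 ∫ u u_a`, and likewise for `E` and `c`. -/
theorem evans_core {T : ℝ} {u ux uxx q b : ℝ → ℝ} (W : IsWave T u ux uxx q b)
    {va va1 va2 vE vE1 vE2 vc vc1 vc2 : ℝ → ℝ} {Ta TE Tc : ℝ}
    (dva : ∀ x, HasDerivAt va (va1 x) x) (dva1 : ∀ x, HasDerivAt va1 (va2 x) x)
    (dva2 : ∀ x, HasDerivAt va2 (-(b x) * va x + q x * va1 x) x)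
    (dvE : ∀ x, HasDerivAt vE (vE1 x) x) (dvE1 : ∀ x, HasDerivAt vE1 (vE2 x) x)
    (dvE2 : ∀ x, HasDerivAt vE2 (-(b x) * vE x + q x * vE1 x) x)
    (dvc : ∀ x, HasDerivAt vc (vc1 x) x) (dvc1 : ∀ x, HasDerivAt vc1 (vc2 x) x)
    (dvc2 : ∀ x, HasDerivAt vc2 (ux x + -(b x) * vc x + q x * vc1 x) x)
    (a1 : va1 0 = 0) (a2 : va2 0 = 1 + q 0 * va 0)
    (E1 : vE1 0 = 0) (E2 : vE2 0 = q 0 * vE 0) (E0 : uxx 0 * vE 0 = -1)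
    (c1 : vc1 0 = 0)
    (ja : va1 T = -Ta * uxx 0) (jE : vE1 T = -TE * uxx 0) (jc : vc1 T = -Tc * uxx 0)
    {H Y : ℂ → ℝ → ℝ → Matrix (Fin 3) (Fin 3) ℂ}
    (hH : ∀ μ k x, H μ k x = !![0, 1, 0; 0, 0, 1; -μ - b x, q x + (k : ℂ) ^ 2, 0])
    (hY0 : ∀ μ k, Y μ k 0 = 1)
    (hY : ∀ μ k x i j, HasDerivAt (fun y => Y μ k y i j) ((H μ k x * Y μ k x) i j) x) :
    (fun p : ℂ × ℝ => Matrix.det (Y p.1 p.2 T - 1) -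
      (-(p.1 ^ 3 / 2) *
        ((Matrix.det
          !![Ta, TE, Tc;
            Ta * u 0 + ∫ x in (0:ℝ)..T, va x, TE * u 0 + ∫ x in (0:ℝ)..T, vE x,
              Tc * u 0 + ∫ x in (0:ℝ)..T, vc x;
            Ta * u 0 ^ 2 + 2 * ∫ x in (0:ℝ)..T, u x * va x,
              TE * u 0 ^ 2 + 2 * ∫ x in (0:ℝ)..T, u x * vE x,
              Tc * u 0 ^ 2 + 2 * ∫ x in (0:ℝ)..T, u x * vc x] : ℝ) : ℂ)
      + p.1 * (p.2 : ℂ) ^ 2 *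
        ((Ta * (TE * u 0 + ∫ x in (0:ℝ)..T, vE x)
          - TE * (Ta * u 0 + ∫ x in (0:ℝ)..T, va x) : ℝ) : ℂ) *
        ((∫ x in (0:ℝ)..T, ux x ^ 2 : ℝ) : ℂ)))
      =O[nhds ((0 : ℂ), (0 : ℝ))] fun p : ℂ × ℝ => ‖p.1‖ ^ 4 + |p.2| ^ 4 := by
  obtain ⟨Ka, -, hKa⟩ := column_kernel W dva dva1 dva2
  obtain ⟨KE, -, hKE⟩ := column_kernel W dvE dvE1 dvE2
  obtain ⟨Kc, -, hKc⟩ := column_translation W dvc dvc1 dvc2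
  generalize (∫ x in (0:ℝ)..T, va x) = Ia at *
  generalize (∫ x in (0:ℝ)..T, vE x) = IE at *
  generalize (∫ x in (0:ℝ)..T, vc x) = Ic at *
  generalize (∫ x in (0:ℝ)..T, u x * va x) = Ja at *
  generalize (∫ x in (0:ℝ)..T, u x * vE x) = JE at *
  generalize (∫ x in (0:ℝ)..T, u x * vc x) = Jc at *
  generalize (∫ x in (0:ℝ)..T, ux x ^ 2) = G at *
  have hw : uxx 0 ≠ 0 := fun h => by rw [h, zero_mul] at E0; norm_num at E0
  -- columns: initial data of the solutions continuing `u_x - μ u_c`, `u_a`, `u_E`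
  let A : ℂ → Matrix (Fin 3) (Fin 3) ℂ := fun μ =>
    !![ux 0 - μ * vc 0, va 0, vE 0; uxx 0 - μ * vc1 0, va1 0, vE1 0;
      q 0 * ux 0 - μ * vc2 0, va2 0, vE2 0]
  -- rows: the functionals `v'`, `L v`, `u L v - u_xx v` at `x = 0`
  let R : Matrix (Fin 3) (Fin 3) ℂ :=
    !![0, 1, 0; q 0, 0, -1; u 0 * q 0 - uxx 0, 0, -(u 0)]
  have hR : R.det = uxx 0 := by
    simp only [R, Matrix.det_fin_three]
    simp
    ring
  have hA : ∀ μ, (A μ).det = -1 := fun μ => by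
    have e : (uxx 0 : ℂ) * vE 0 = -1 := by exact_mod_cast E0
    simp only [A, Matrix.det_fin_three, a1, a2, E1, E2, c1]
    simp
    linear_combination e
  let N : ℂ × ℝ → Matrix (Fin 3) (Fin 3) ℂ := fun p =>
    R * (Y p.1 p.2 T * A p.1 - A p.1)
  -- the leading orders of the entries of `N`, from `column_translation` and `column_kernel`
  let P : ℂ × ℝ → Matrix (Fin 3) (Fin 3) ℂ := fun p =>
    !![-p.1 * ((vc1 T - vc1 0 : ℝ) : ℂ), ((va1 T - va1 0 : ℝ) : ℂ), ((vE1 T - vE1 0 : ℝ) : ℂ);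
      -p.1 ^ 2 * (Ic : ℂ), p.1 * (Ia : ℂ), p.1 * (IE : ℂ);
      -p.1 ^ 2 * (Jc : ℂ) + (p.2 : ℂ) ^ 2 * (G : ℂ), p.1 * (Ja : ℂ), p.1 * (JE : ℂ)]
  have hN : ∀ p, (N p).det = -(uxx 0) * (Y p.1 p.2 T - 1).det := fun p => by
    have e : N p = R * (Y p.1 p.2 T - 1) * A p.1 := by
      simp only [N]
      rw [Matrix.mul_assoc, Matrix.sub_mul, Matrix.one_mul]
    rw [e, Matrix.det_mul, Matrix.det_mul, hR, hA]
    ring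
  -- the norm of `ℂ × ℝ` is the maximum, so `‖μ‖ ≤ ε` and `|k| ≤ ε`
  set ε : ℂ × ℝ → ℝ := fun p => ‖p‖ with hεdef
  have hsmall : ∀ᶠ p in nhds ((0 : ℂ), (0 : ℝ)), ‖ε p‖ ≤ 1 := by
    have : Filter.Tendsto (fun p : ℂ × ℝ => ‖p‖) (nhds ((0 : ℂ), (0 : ℝ))) (nhds 0) := by
      have h := (continuous_norm (E := ℂ × ℝ)).tendsto ((0 : ℂ), (0 : ℝ))
      rwa [show ‖((0 : ℂ), (0 : ℝ))‖ = 0 from norm_zero (E := ℂ × ℝ)] at h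
    filter_upwards [this.eventually (gt_mem_nhds one_pos)] with p hp
    simpa [ε] using hp.le
  have N0 : ∀ p j, N p 0 j = (Y p.1 p.2 T * A p.1) 1 j - (Y p.1 p.2 0 * A p.1) 1 j := by
    intro p j
    rw [hY0, Matrix.one_mul]
    simp only [N]
    rw [Matrix.mul_apply, Fin.sum_univ_three]
    simp [R]
  have N1 : ∀ p j, N p 1 j = (q 0 * (Y p.1 p.2 T * A p.1) 0 j - (Y p.1 p.2 T * A p.1) 2 j)
      - (q 0 * (Y p.1 p.2 0 * A p.1) 0 j - (Y p.1 p.2 0 * A p.1) 2 j) := by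
    intro p j
    rw [hY0, Matrix.one_mul]
    simp only [N]
    rw [Matrix.mul_apply, Fin.sum_univ_three]
    simp only [R, Matrix.sub_apply]
    simp
    ring
  have N2 : ∀ p j, N p 2 j = (u 0 * (q 0 * (Y p.1 p.2 T * A p.1) 0 j - (Y p.1 p.2 T * A p.1) 2 j)
        - uxx 0 * (Y p.1 p.2 T * A p.1) 0 j)
      - (u 0 * (q 0 * (Y p.1 p.2 0 * A p.1) 0 j - (Y p.1 p.2 0 * A p.1) 2 j)
        - uxx 0 * (Y p.1 p.2 0 * A p.1) 0 j) := by
    intro p j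
    rw [hY0, Matrix.one_mul]
    simp only [N]
    rw [Matrix.mul_apply, Fin.sum_univ_three]
    simp only [R, Matrix.sub_apply]
    simp
    ring
  have nε : ∀ (p : ℂ × ℝ) (n : ℕ), ‖ε p ^ n‖ = ε p ^ n := fun p n => by
    rw [norm_pow, Real.norm_of_nonneg (norm_nonneg _)]
  have hZ0 : ∀ (p : ℂ × ℝ) (i j : Fin 3), (Y p.1 p.2 0 * A p.1) i j = A p.1 i j := fun p i j => by
    rw [hY0, Matrix.one_mul]
  have ha := fun (p : ℂ × ℝ) (h : ‖p‖ ≤ 1) => hKa p.1 p.2 ‖p‖ (norm_fst_le p) (norm_snd_le p) h _ _ _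
    (isSol_of_matrix (hH p.1 p.2) (hY p.1 p.2) (A p.1) 1) (by simp only [hZ0]; simp [A])
    (by simp only [hZ0]; simp [A]) (by simp only [hZ0]; simp [A])
  have hE := fun (p : ℂ × ℝ) (h : ‖p‖ ≤ 1) => hKE p.1 p.2 ‖p‖ (norm_fst_le p) (norm_snd_le p) h _ _ _
    (isSol_of_matrix (hH p.1 p.2) (hY p.1 p.2) (A p.1) 2) (by simp only [hZ0]; simp [A])
    (by simp only [hZ0]; simp [A]) (by simp only [hZ0]; simp [A])
  have hc := fun (p : ℂ × ℝ) (h : ‖p‖ ≤ 1) => hKc p.1 p.2 ‖p‖ (norm_fst_le p) (norm_snd_le p) h _ _ _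
    (isSol_of_matrix (hH p.1 p.2) (hY p.1 p.2) (A p.1) 0) (by simp only [hZ0]; simp [A])
    (by simp only [hZ0]; simp [A]) (by simp only [hZ0]; simp [A])
  have hμO : (fun p : ℂ × ℝ => p.1) =O[nhds ((0 : ℂ), (0 : ℝ))] fun p => ε p :=
    IsBigO.of_bound 1 (Filter.Eventually.of_forall fun p => by
      simpa [ε] using norm_fst_le p)
  have hkO : (fun p : ℂ × ℝ => (p.2 : ℂ)) =O[nhds ((0 : ℂ), (0 : ℝ))] fun p => ε p :=
    IsBigO.of_bound 1 (Filter.Eventually.of_forall fun p => by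
      simpa [ε] using norm_snd_le p)
  have cO : ∀ z : ℂ, (fun _ : ℂ × ℝ => z) =O[nhds ((0 : ℂ), (0 : ℝ))] fun p => ε p ^ 0 := fun z => by
    simpa using isBigO_const_const z (one_ne_zero (α := ℝ)) (nhds ((0 : ℂ), (0 : ℝ)))
  have lin : ∀ z : ℂ, (fun p : ℂ × ℝ => p.1 * z) =O[nhds ((0 : ℂ), (0 : ℝ))] fun p => ε p ^ 1 :=
    fun z => by simpa using hμO.mul (cO z)
  have sqμ : ∀ z : ℂ, (fun p : ℂ × ℝ => -p.1 ^ 2 * z) =O[nhds ((0 : ℂ), (0 : ℝ))]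
      fun p => ε p ^ 2 := fun z => by simpa using (hμO.pow 2).neg_left.mul (cO z)
  have sqk : ∀ z : ℂ, (fun p : ℂ × ℝ => (p.2 : ℂ) ^ 2 * z) =O[nhds ((0 : ℂ), (0 : ℝ))]
      fun p => ε p ^ 2 := fun z => by simpa using (hkO.pow 2).mul (cO z)
  have hdet := det_close (l := nhds ((0 : ℂ), (0 : ℝ))) (ε := ε) hsmall (N := N) (P := P)
    (w := ![![1, 0, 0], ![2, 1, 1], ![2, 1, 1]]) rfl (by
      intro i j
      fin_cases j
      · refine IsBigO.of_bound Kc ?_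
        filter_upwards [hsmall] with p hp
        rw [nε]
        have h := hc p (by simpa [ε] using hp)
        fin_cases i
        · exact (congrArg norm (congrArg₂ _ (N0 p 0) rfl)).trans_le h.1
        · exact (congrArg norm (congrArg₂ _ (N1 p 0) rfl)).trans_le h.2.1
        · exact (congrArg norm (congrArg₂ _ (N2 p 0) rfl)).trans_le h.2.2
      · refine IsBigO.of_bound Ka ?_
        filter_upwards [hsmall] with p hp
        rw [nε]
        have h := ha p (by simpa [ε] using hp)
        fin_cases i
        · refine (congrArg norm (congrArg₂ _ (N0 p 1) rfl)).trans_le (h.1.trans_eq ?_)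
          simp [ε]
        · exact (congrArg norm (congrArg₂ _ (N1 p 1) rfl)).trans_le h.2.1
        · exact (congrArg norm (congrArg₂ _ (N2 p 1) rfl)).trans_le h.2.2
      · refine IsBigO.of_bound KE ?_
        filter_upwards [hsmall] with p hp
        rw [nε]
        have h := hE p (by simpa [ε] using hp)
        fin_cases i
        · refine (congrArg norm (congrArg₂ _ (N0 p 2) rfl)).trans_le (h.1.trans_eq ?_)
          simp [ε]
        · exact (congrArg norm (congrArg₂ _ (N1 p 2) rfl)).trans_le h.2.1
        · exact (congrArg norm (congrArg₂ _ (N2 p 2) rfl)).trans_le h.2.2) (by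
      intro i j
      fin_cases i <;> fin_cases j
      · exact (lin (((vc1 T - vc1 0 : ℝ) : ℂ))).neg_left.congr_left fun p => by simp [P]
      · exact cO _
      · exact cO _
      · exact sqμ _
      · exact lin _
      · exact lin _
      · exact (sqμ _).add (sqk _)
      · exact lin _
      · exact lin _)
  -- the terms in `u 0` on the right disappear by subtracting multiples of the first row
  have hP : ∀ p, (P p).det = -(uxx 0) * (-(p.1 ^ 3 / 2) *
        ((Matrix.det
          !![Ta, TE, Tc; Ta * u 0 + Ia, TE * u 0 + IE, Tc * u 0 + Ic;
            Ta * u 0 ^ 2 + 2 * Ja, TE * u 0 ^ 2 + 2 * JE, Tc * u 0 ^ 2 + 2 * Jc] : ℝ) : ℂ)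
      + p.1 * (p.2 : ℂ) ^ 2 * ((Ta * (TE * u 0 + IE) - TE * (Ta * u 0 + Ia) : ℝ) : ℂ) * (G : ℂ)) := by
    intro p
    simp only [P, Matrix.det_fin_three, ja, jE, jc, a1, E1, c1]
    simp
    ring
  have hfin : (fun p : ℂ × ℝ => ε p ^ 4) =O[nhds ((0 : ℂ), (0 : ℝ))]
      fun p : ℂ × ℝ => ‖p.1‖ ^ 4 + |p.2| ^ 4 := by
    refine IsBigO.of_bound 1 (Filter.Eventually.of_forall fun p => ?_)
    rw [nε, one_mul, Real.norm_of_nonneg (by positivity)]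
    have h4 : 0 ≤ ‖p.1‖ ^ 4 := by positivity
    have h4' : 0 ≤ |p.2| ^ 4 := by positivity
    rcases max_cases ‖p.1‖ ‖p.2‖ with h | h
    · simp only [ε, Prod.norm_def, h.1]; linarith
    · have h' := h.1
      simp only [Real.norm_eq_abs] at h'
      simp only [ε, Prod.norm_def, Real.norm_eq_abs, h']; linarith
  have hw' : (uxx 0 : ℂ) ≠ 0 := by exact_mod_cast hw
  refine ((hdet.const_mul_left (-(uxx 0 : ℂ)⁻¹)).trans hfin).congr_left fun p => ?_
  rw [hN, hP, ← mul_sub, ← mul_assoc]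
  rw [neg_mul_neg, inv_mul_cancel₀ hw', one_mul]

/-! ### The Evans function of the wave family -/

/-- Local normal form of the periodic Evans function of the linearized
generalized Zakharov–Kuznetsov equation about a periodic gKdV wave:
`D(μ,k) = −(μ³/2)·{T,M,P}_{a,E,c} + μk²·{T,M}_{a,E}·∫₀ᵀ u_x² + O(|μ|⁴ + k⁴)`. -/
theorem gZK_evans_expansion
    (f F : ℝ → ℝ) (hf : ContDiff ℝ 3 f)
    (hF : ∀ s, HasDerivAt F (f s) s) (hF0 : F 0 = 0)
    (V : ℝ → ℝ → ℝ → ℝ) (hV : ∀ s a c, V s a c = F s - c/2 * s^2 - a * s)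
    (Ω : Set (ℝ × ℝ × ℝ)) (hΩ : IsOpen Ω)
    (um up : ℝ × ℝ × ℝ → ℝ)
    (hum : ContDiffOn ℝ 1 um Ω) (hup : ContDiffOn ℝ 1 up Ω)
    (horder : ∀ p ∈ Ω, um p < up p)
    (hVm : ∀ a E c : ℝ, (a, E, c) ∈ Ω → V (um (a, E, c)) a c = E)
    (hVp : ∀ a E c : ℝ, (a, E, c) ∈ Ω → V (up (a, E, c)) a c = E)
    (hVm' : ∀ a E c : ℝ, (a, E, c) ∈ Ω → deriv (fun s => V s a c) (um (a, E, c)) < 0)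
    (hVp' : ∀ a E c : ℝ, (a, E, c) ∈ Ω → 0 < deriv (fun s => V s a c) (up (a, E, c)))
    (hbelow : ∀ a E c : ℝ, (a, E, c) ∈ Ω →
      ∀ s ∈ Set.Ioo (um (a, E, c)) (up (a, E, c)), V s a c < E)
    (T : ℝ × ℝ × ℝ → ℝ) (hT : ContDiffOn ℝ 1 T Ω) (hTpos : ∀ p ∈ Ω, 0 < T p)
    (u : ℝ → ℝ → ℝ → ℝ → ℝ)
    (hu : ContDiffOn ℝ 3 (fun q : ℝ × ℝ × ℝ × ℝ => u q.1 q.2.1 q.2.2.1 q.2.2.2)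
      ((Set.univ : Set ℝ) ×ˢ Ω))
    (hprofile : ∀ a E c : ℝ, (a, E, c) ∈ Ω → ∀ x : ℝ,
      deriv (deriv (fun y => u y a E c)) x + f (u x a E c) - c * u x a E c = a)
    (henergy : ∀ a E c : ℝ, (a, E, c) ∈ Ω → ∀ x : ℝ,
      1/2 * (deriv (fun y => u y a E c) x)^2 + F (u x a E c)
        - c/2 * (u x a E c)^2 - a * u x a E c = E)
    (hperiodic : ∀ a E c : ℝ, (a, E, c) ∈ Ω → ∀ x : ℝ,
      u (x + T (a, E, c)) a E c = u x a E c)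
    (hinit : ∀ a E c : ℝ, (a, E, c) ∈ Ω → u 0 a E c = um (a, E, c))
    (hinit' : ∀ a E c : ℝ, (a, E, c) ∈ Ω → deriv (fun y => u y a E c) 0 = 0)
    (M P : ℝ × ℝ × ℝ → ℝ)
    (hM : ∀ q : ℝ × ℝ × ℝ, M q = ∫ x in (0:ℝ)..(T q), u x q.1 q.2.1 q.2.2)
    (hP : ∀ q : ℝ × ℝ × ℝ, P q = ∫ x in (0:ℝ)..(T q), (u x q.1 q.2.1 q.2.2)^2)
    (a E c : ℝ) (hmem : (a, E, c) ∈ Ω)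
    (Hm : ℂ → ℝ → ℝ → Matrix (Fin 3) (Fin 3) ℂ)
    (hHm : ∀ (μ : ℂ) (k x : ℝ), Hm μ k x =
      !![0, 1, 0;
         0, 0, 1;
         -μ - ((deriv (deriv f) (u x a E c) * deriv (fun y => u y a E c) x : ℝ) : ℂ),
           ((c + k^2 - deriv f (u x a E c) : ℝ) : ℂ), 0])
    (Y : ℂ → ℝ → ℝ → Matrix (Fin 3) (Fin 3) ℂ)
    (hY0 : ∀ (μ : ℂ) (k : ℝ), Y μ k 0 = 1)
    (hYode : ∀ (μ : ℂ) (k x : ℝ) (i j : Fin 3),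
      HasDerivAt (fun y => Y μ k y i j) ((Hm μ k x * Y μ k x) i j) x)
    (D : ℂ → ℝ → ℂ)
    (hD : ∀ (μ : ℂ) (k : ℝ), D μ k = Matrix.det (Y μ k (T (a, E, c)) - 1)) :
    (fun q : ℂ × ℝ => D q.1 q.2 -
        (-(q.1^3 / 2) *
          ((Matrix.det
            !![deriv (fun a' => T (a', E, c)) a, deriv (fun E' => T (a, E', c)) E,
                 deriv (fun c' => T (a, E, c')) c;
               deriv (fun a' => M (a', E, c)) a, deriv (fun E' => M (a, E', c)) E,
                 deriv (fun c' => M (a, E, c')) c;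
               deriv (fun a' => P (a', E, c)) a, deriv (fun E' => P (a, E', c)) E,
                 deriv (fun c' => P (a, E, c')) c] : ℝ) : ℂ)
         + q.1 * ((q.2 : ℂ))^2 *
            (((deriv (fun a' => T (a', E, c)) a * deriv (fun E' => M (a, E', c)) E
               - deriv (fun E' => T (a, E', c)) E * deriv (fun a' => M (a', E, c)) a : ℝ)) : ℂ) *
            (((∫ x in (0:ℝ)..(T (a, E, c)), (deriv (fun y => u y a E c) x)^2 : ℝ)) : ℂ)))
      =O[nhds ((0 : ℂ), (0 : ℝ))] (fun q : ℂ × ℝ => ‖q.1‖^4 + |q.2|^4) := by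
  have huat : ∀ x a E c, (a, E, c) ∈ Ω → ContDiffAt ℝ 3
      (fun q : ℝ × ℝ × ℝ × ℝ => u q.1 q.2.1 q.2.2.1 q.2.2.2) (x, a, E, c) := fun x a E c h =>
    hu.contDiffAt ((isOpen_univ.prod hΩ).mem_nhds ⟨trivial, h⟩)
  have hTat : DifferentiableAt ℝ T (a, E, c) :=
    (hT.contDiffAt (hΩ.mem_nhds hmem)).differentiableAt (by norm_num)
  have hen0 : ∀ a E c, (a, E, c) ∈ Ω →
      F (u 0 a E c) - c / 2 * u 0 a E c ^ 2 - a * u 0 a E c = E := fun a E c h => by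
    have := henergy a E c h 0
    rw [hinit' a E c h] at this
    linarith
  have sa : IsOpen {s : ℝ | (s, E, c) ∈ Ω} := hΩ.preimage (by fun_prop)
  have sE : IsOpen {s : ℝ | (a, s, c) ∈ Ω} := hΩ.preimage (by fun_prop)
  have sc : IsOpen {s : ℝ | (a, E, s) ∈ Ω} := hΩ.preimage (by fun_prop)
  have ta : HasDerivAt (fun s => T (s, E, c)) (deriv (fun s => T (s, E, c)) a) a :=
    DifferentiableAt.hasDerivAt (DifferentiableAt.comp (g := T) (f := fun s : ℝ => (s, E, c)) a hTat
      (by fun_prop))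
  have tE : HasDerivAt (fun s => T (a, s, c)) (deriv (fun s => T (a, s, c)) E) E :=
    DifferentiableAt.hasDerivAt (DifferentiableAt.comp (g := T) (f := fun s : ℝ => (a, s, c)) E hTat
      (by fun_prop))
  have tc : HasDerivAt (fun s => T (a, E, s)) (deriv (fun s => T (a, E, s)) c) c :=
    DifferentiableAt.hasDerivAt (DifferentiableAt.comp (g := T) (f := fun s : ℝ => (a, E, s)) c hTat
      (by fun_prop))
  obtain ⟨va, va1, va2, dva, dva1, eva, a1, a0, -, ja, Ma, Pa⟩ :=
    exists_variation hf hF (U := fun q => u q.1 q.2 E c) sa (s₀ := a) hmem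
      (fun x s hs => ContDiffAt.comp (f := fun q : ℝ × ℝ => (q.1, q.2, E, c)) (x, s)
        (huat x s E c hs) (by fun_prop))
      (hasDerivAt_id a) (hasDerivAt_const a c) (hasDerivAt_const a E) ta
      (fun s hs => hprofile s E c hs) (fun s hs => hen0 s E c hs)
      (fun s hs => hperiodic s E c hs) (fun s hs => hinit' s E c hs)
  obtain ⟨vE, vE1, vE2, dvE, dvE1, evE, E1, E0, -, jE, ME, PE⟩ :=
    exists_variation hf hF (U := fun q => u q.1 a q.2 c) sE (s₀ := E) hmem
      (fun x s hs => ContDiffAt.comp (f := fun q : ℝ × ℝ => (q.1, a, q.2, c)) (x, s)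
        (huat x a s c hs) (by fun_prop))
      (hasDerivAt_const E a) (hasDerivAt_const E c) (hasDerivAt_id E) tE
      (fun s hs => hprofile a s c hs) (fun s hs => hen0 a s c hs)
      (fun s hs => hperiodic a s c hs) (fun s hs => hinit' a s c hs)
  obtain ⟨vc, vc1, vc2, dvc, dvc1, evc, c1, -, -, jc, Mc, Pc⟩ :=
    exists_variation hf hF (U := fun q => u q.1 a E q.2) sc (s₀ := c) hmem
      (fun x s hs => ContDiffAt.comp (f := fun q : ℝ × ℝ => (q.1, a, E, q.2)) (x, s)
        (huat x a E s hs) (by fun_prop))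
      (hasDerivAt_const c a) (hasDerivAt_id c) (hasDerivAt_const c E) tc
      (fun s hs => hprofile a E s hs) (fun s hs => hen0 a E s hs)
      (fun s hs => hperiodic a E s hs) (fun s hs => hinit' a E s hs)
  simp only [id] at a0 E0 ja jE jc eva evE evc
  have hw3 : ContDiff ℝ 3 fun x => u x a E c := contDiff_iff_contDiffAt.2 fun x =>
    ContDiffAt.comp (f := fun y : ℝ => (y, a, E, c)) x (huat x a E c hmem) (by fun_prop)
  have hw2 : ContDiff ℝ 2 (deriv fun x => u x a E c) :=
    ((contDiff_succ_iff_deriv (n := 2)).1 hw3).2.2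
  have hf2 : ContDiff ℝ 2 (deriv f) := ((contDiff_succ_iff_deriv (n := 2)).1 hf).2.2
  have hf1 : ContDiff ℝ 1 (deriv (deriv f)) := ((contDiff_succ_iff_deriv (n := 1)).1 hf2).2.2
  have du : ∀ x, HasDerivAt (fun x => u x a E c) (deriv (fun x => u x a E c) x) x := fun x =>
    (hw3.differentiable (by norm_num) x).hasDerivAt
  have dq : ∀ x, HasDerivAt (fun x => c - deriv f (u x a E c))
      (-(deriv (deriv f) (u x a E c) * deriv (fun x => u x a E c) x)) x := fun x =>
    (HasDerivAt.comp (h₂ := deriv f) x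
      (hf2.differentiable (by norm_num) (u x a E c)).hasDerivAt (du x)).const_sub c
  have hper := hperiodic a E c hmem
  have uT : u (T (a, E, c)) a E c = u 0 a E c := by simpa using hper 0
  have uxT : deriv (fun x => u x a E c) (T (a, E, c)) = 0 := by
    have := deriv_comp_add_const (fun x => u x a E c) (T (a, E, c)) 0
    rw [zero_add, funext hper] at this
    rw [← this, hinit' a E c hmem]
  have W : IsWave (T (a, E, c)) (fun x => u x a E c) (deriv fun x => u x a E c)
      (fun x => a + c * u x a E c - f (u x a E c)) (fun x => c - deriv f (u x a E c))
      (fun x => deriv (deriv f) (u x a E c) * deriv (fun x => u x a E c) x) := by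
    refine ⟨hTpos _ hmem, du, fun x => ?_, fun x => ?_, dq, ?_, hinit' a E c hmem, uxT, uT, ?_, ?_⟩
    · refine (hw2.differentiable (by norm_num) x).hasDerivAt.congr_deriv ?_
      linarith [hprofile a E c hmem x]
    · have h := (((du x).const_mul c).const_add a).sub
        ((hf.differentiable (by norm_num) (u x a E c)).hasDerivAt.comp x (du x))
      refine h.congr_deriv ?_
      ring
    · exact (hf1.continuous.comp hw3.continuous).mul hw2.continuous
    · simp only [uT]
    · simp only [uT]
  -- the linearized profile equation, differentiated once more in `x`
  have dv2 : ∀ {v v1 v2 : ℝ → ℝ} {α' γ' : ℝ}, (∀ x, HasDerivAt v (v1 x) x) →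
      (∀ x, v2 x = α' + γ' * u x a E c + (c - deriv f (u x a E c)) * v x) → ∀ x,
      HasDerivAt v2 (γ' * deriv (fun x => u x a E c) x
        + -(deriv (deriv f) (u x a E c) * deriv (fun x => u x a E c) x) * v x
        + (c - deriv f (u x a E c)) * v1 x) x := fun {v v1 v2 α' γ'} dv ev x => by
    rw [funext ev]
    have h := (((du x).const_mul γ').const_add α').add ((dq x).mul (dv x))
    refine h.congr_deriv ?_
    ring
  have core := evans_core W dva dva1 (fun x => (dv2 dva eva x).congr_deriv (by ring))
    dvE dvE1 (fun x => (dv2 dvE evE x).congr_deriv (by ring))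
    dvc dvc1 (fun x => (dv2 dvc evc x).congr_deriv (by ring))
    a1 (by rw [eva]; ring) E1 (by rw [evE]; ring) (by rw [E0]; ring) c1 ja jE jc
    (H := Hm) (Y := Y) (fun μ k x => by
      rw [hHm]
      congr! 1
      push_cast
      ring_nf) hY0 hYode
  have Ma' := Ma.deriv
  have ME' := ME.deriv
  have Mc' := Mc.deriv
  have Pa' := Pa.deriv
  have PE' := PE.deriv
  have Pc' := Pc.deriv
  simp only [hD, hM, hP]
  simp only at Ma' ME' Mc' Pa' PE' Pc'
  rw [Ma', ME', Mc', Pa', PE', Pc']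
  exact core
end

section
/- Let J > 0 and B > 0 be real constants and let D : ℝ × ℝ → ℝ be continuous on a neighborhood of (0, 0) and satisfy D(μ, k) = −(J/2)·μ³ + B·μ·k² + R(μ, k), where R(μ, k) = O(μ⁴ + k⁴) as (μ, k) → (0, 0). Then there exists k₀ > 0 such that for every real k with 0 < |k| < k₀ there exists a real μ with (1/2)·√(2B/J)·|k| ≤ μ ≤ 2·√(2B/J)·|k| and D(μ, k) = 0. -/
open Asymptotics

/-!
Put `s = √(2B/J)`, so that `J s² = 2B`. On the line `μ = c s |k|` the cubic part equals
`B s c (1 - c²) |k|³`, which is `(3/8) B s |k|³ > 0` at `c = 1/2` and `-6 B s |k|³ < 0` at `c = 2`.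
The remainder is `O(|k|⁴)` uniformly for these `c`, so for small `k ≠ 0` it cannot change either
sign, and the intermediate value theorem in `μ` gives a root in between.
-/

/-- Root bifurcation for the Evans function normal form
`D(μ,k) = −(J/2)μ³ + B·μ·k² + O(μ⁴ + k⁴)` with `J, B > 0`: for every small nonzero
transverse wavenumber `k` there is a real root `μ ≍ √(2B/J)·|k|` of `D(·,k)`. -/
theorem evans_normal_form_root
    (J B : ℝ) (hJ : 0 < J) (hB : 0 < B)
    (D R : ℝ → ℝ → ℝ)
    (hcont : ∃ U ∈ nhds ((0:ℝ), (0:ℝ)), ContinuousOn (fun p : ℝ × ℝ => D p.1 p.2) U)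
    (hD : ∀ μ k : ℝ, D μ k = -(J/2) * μ^3 + B * μ * k^2 + R μ k)
    (hR : (fun p : ℝ × ℝ => R p.1 p.2)
      =O[nhds ((0:ℝ), (0:ℝ))] (fun p : ℝ × ℝ => p.1^4 + p.2^4)) :
    ∃ k₀ > 0, ∀ k : ℝ, 0 < |k| → |k| < k₀ →
      ∃ μ : ℝ, (1/2) * Real.sqrt (2 * B / J) * |k| ≤ μ ∧
        μ ≤ 2 * Real.sqrt (2 * B / J) * |k| ∧ D μ k = 0 := by
  obtain ⟨U, hU, hDU⟩ := hcont
  obtain ⟨C, hC, hb⟩ := hR.exists_pos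
  obtain ⟨ε, hε, hball⟩ := Metric.mem_nhds_iff.1 (Filter.inter_mem hU hb.bound)
  have hs : 0 < Real.sqrt (2 * B / J) := Real.sqrt_pos.2 (by positivity)
  have hs2 : J * Real.sqrt (2 * B / J) ^ 2 = 2 * B := by
    rw [Real.sq_sqrt (by positivity)]; field_simp
  generalize Real.sqrt (2 * B / J) = s at hs hs2 ⊢
  -- The first bound keeps `[s|k|/2, 2s|k|] × {k}` inside the ball of radius `ε`; the second makes
  -- the remainder, at most `C (16 s⁴ + 1) |k|⁴` there, smaller than `(3/8) B s |k|³`.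
  refine ⟨min (ε / (2 * s + 1)) (3 / 8 * B * s / (C * (16 * s ^ 4 + 1))),
    lt_min (by positivity) (by positivity), fun k hk hk0 => ?_⟩
  obtain ⟨h1, h2⟩ := lt_min_iff.1 hk0
  rw [lt_div_iff₀ (by positivity)] at h1 h2
  have hk2 : k ^ 2 = |k| ^ 2 := (sq_abs k).symm
  have hk4 : k ^ 4 = |k| ^ 4 := by rw [show k ^ 4 = (k ^ 2) ^ 2 by ring, hk2]; ring
  have hst : 0 < s * |k| := by positivity
  have hmem : ∀ μ ∈ Set.Icc (1 / 2 * s * |k|) (2 * s * |k|), (μ, k) ∈ Metric.ball (0, 0) ε := by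
    rintro μ ⟨ha, hb'⟩
    rw [Metric.mem_ball, Prod.dist_eq, max_lt_iff, Real.dist_eq, Real.dist_eq, sub_zero, sub_zero,
      abs_of_nonneg (by nlinarith : (0:ℝ) ≤ μ)]
    constructor <;> nlinarith
  have hrem : ∀ μ ∈ Set.Icc (1 / 2 * s * |k|) (2 * s * |k|),
      |R μ k| ≤ 3 / 8 * B * s * |k| ^ 3 := by
    intro μ hμ
    have h := (hball (hmem μ hμ)).2
    simp only [Set.mem_setOf_eq, Real.norm_eq_abs] at h
    rw [abs_of_nonneg (by positivity : (0:ℝ) ≤ μ ^ 4 + k ^ 4), hk4] at h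
    have hμ0 : 0 ≤ μ := by have := hμ.1; nlinarith
    have hμ4 : μ ^ 4 ≤ (2 * s * |k|) ^ 4 := pow_le_pow_left₀ hμ0 hμ.2 4
    calc |R μ k| ≤ C * (μ ^ 4 + |k| ^ 4) := h
      _ ≤ C * ((2 * s * |k|) ^ 4 + |k| ^ 4) := by gcongr
      _ = |k| * (C * (16 * s ^ 4 + 1)) * |k| ^ 3 := by ring
      _ ≤ 3 / 8 * B * s * |k| ^ 3 := by gcongr
  have hle : 1 / 2 * s * |k| ≤ 2 * s * |k| := by nlinarith
  have hf : ContinuousOn (fun μ => D μ k) (Set.Icc (1 / 2 * s * |k|) (2 * s * |k|)) :=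
    hDU.comp (f := fun μ : ℝ => (μ, k)) (by fun_prop) fun μ hμ => (hball (hmem μ hμ)).1
  have hpos : 0 < B * s * |k| ^ 3 := by positivity
  have hlow : 0 ≤ D (1 / 2 * s * |k|) k := by
    have hr := (abs_le.1 (hrem _ (Set.left_mem_Icc.2 hle))).1
    have e : -(J / 2) * (1 / 2 * s * |k|) ^ 3 + B * (1 / 2 * s * |k|) * |k| ^ 2
        = 3 / 8 * B * s * |k| ^ 3 := by
      linear_combination (-(1 / 16) * s * |k| ^ 3) * hs2
    rw [hD, hk2, e]; linarith
  have hupp : D (2 * s * |k|) k ≤ 0 := by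
    have hr := (abs_le.1 (hrem _ (Set.right_mem_Icc.2 hle))).2
    have e : -(J / 2) * (2 * s * |k|) ^ 3 + B * (2 * s * |k|) * |k| ^ 2
        = -6 * (B * s * |k| ^ 3) := by
      linear_combination (-4 * s * |k| ^ 3) * hs2
    rw [hD, hk2, e]; linarith
  obtain ⟨μ, hμ, h0⟩ := intermediate_value_Icc' hle hf ⟨hupp, hlow⟩
  exact ⟨μ, hμ.1, hμ.2, h0⟩
end
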